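/- arXiv:2507.18991 — 3 statements merged into one kernel-verified Lean document; each statement's English description precedes it below -/
import Mathlib

section
/- Let n ≥ 2, let u be a nonzero harmonic polynomial on ℝⁿ and let v be an entire harmonic function on ℝⁿ such that Z(u) ⊆ Z(v). Suppose there exist γ ≥ 0 and C > 0 such that |v(x)| ≤ C(1+|x|)^γ · |u(x)| for all x ∈ ℝⁿ (i.e. the ratio v/u satisfies |v/u|(x) ≤ C(1+|x|)^γ). Then there exists a polynomial R of total degree at most ⌊γ⌋ such that v(x) = u(x)·R(x) for all x ∈ ℝⁿ. -/
open MeasureTheory Metric Filter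

/-- The Laplacian of `u : ℝⁿ → ℝ` at `x`, as the sum of second partial derivatives. -/
noncomputable def lapl {n : ℕ} (u : EuclideanSpace ℝ (Fin n) → ℝ)
    (x : EuclideanSpace ℝ (Fin n)) : ℝ :=
  ∑ i, fderiv ℝ (fun y => fderiv ℝ u y (EuclideanSpace.single i 1)) x (EuclideanSpace.single i 1)

/-- `u` is harmonic on all of ℝⁿ: it is C² and its Laplacian vanishes identically. -/
def HarmonicFn {n : ℕ} (u : EuclideanSpace ℝ (Fin n) → ℝ) : Prop :=
  ContDiff ℝ 2 u ∧ ∀ x, lapl u x = 0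

/-- `u` is harmonic on the (open) set `Ω`: it is C² on `Ω` and its Laplacian vanishes on `Ω`. -/
def HarmonicFnOn {n : ℕ} (u : EuclideanSpace ℝ (Fin n) → ℝ)
    (Ω : Set (EuclideanSpace ℝ (Fin n))) : Prop :=
  ContDiffOn ℝ 2 u Ω ∧ ∀ x ∈ Ω, lapl u x = 0

/-- A polynomial `P ∈ ℝ[x₁,…,xₙ]` is harmonic if `∑ i, ∂²P/∂xᵢ²` is the zero polynomial. -/
def IsHarmonicPoly {n : ℕ} (P : MvPolynomial (Fin n) ℝ) : Prop :=
  ∑ i, MvPolynomial.pderiv i (MvPolynomial.pderiv i P) = 0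

/-- The polynomial function on ℝⁿ associated with `P ∈ ℝ[x₁,…,xₙ]`. -/
noncomputable def polyFun {n : ℕ} (P : MvPolynomial (Fin n) ℝ)
    (x : EuclideanSpace ℝ (Fin n)) : ℝ :=
  MvPolynomial.eval (fun i => x i) P

/-!
Rescaled mean value identities give gradient estimates, so differentiating `v` lowers its polynomial
growth by one degree; hence `v` is a polynomial `Q`.

An irreducible factor `f` of the harmonic polynomial `P` changes sign (Brelot–Choquet): if
`P = f * g` with `f` nonnegative and nonconstant, then the product `F * G` of the leading forms of
`f` and `g` is harmonic, hence orthogonal to the form `G` of lower degree with respect to a radial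
weight, although `F * G ^ 2` is nonnegative and nonzero.

An irreducible `f` that changes sign divides every polynomial `q` vanishing on its zeros. Otherwise
eliminating a variable `x_i` gives a nonzero `f * a + q * b` free of `x_i`, which vanishes on every
line in direction `i` meeting the zero set of `f`; but sign changes of `f` along such lines are
stable under perturbation. Cancelling the irreducible factors of `P` one at a time gives `P ∣ Q`,
and the degree of the quotient is read off from its growth.
-/

section ZeroSets

open MvPolynomial

variable {σ : Type*}

/-- `f` takes both negative and positive values, as a polynomial function. For an irreducible `f`
this makes the zero set large enough to detect divisibility by `f`. -/
def ChangesSign (f : MvPolynomial σ ℝ) : Prop :=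
  (∃ x, eval x f < 0) ∧ ∃ x, 0 < eval x f

lemma dense_setOf_eval_ne_zero [Finite σ] {P : MvPolynomial σ ℝ} (hP : P ≠ 0) :
    Dense {x : σ → ℝ | eval x P ≠ 0} := by
  cases nonempty_fintype σ
  refine dense_iff_inter_open.2 fun U hU ⟨x, hx⟩ => ?_
  obtain ⟨ε, hε, hball⟩ := Metric.isOpen_iff.1 hU x hx
  by_contra hempty
  refine hP (funext_set (fun i => ball (x i) ε) (fun i => ?_) fun y hy => ?_)
  · rw [Real.ball_eq_Ioo]
    exact Set.Ioo_infinite (by linarith)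
  · by_contra hne
    refine hempty ⟨y, hball ?_, fun h => hne (by rw [h, map_zero])⟩
    rw [mem_ball, dist_pi_lt_iff hε]
    exact fun i => hy i trivial

lemma le_of_forall_eval_ne_zero [Finite σ] {P : MvPolynomial σ ℝ} (hP : P ≠ 0)
    {g h : (σ → ℝ) → ℝ} (hg : Continuous g) (hh : Continuous h)
    (hgh : ∀ x, eval x P ≠ 0 → g x ≤ h x) (x : σ → ℝ) : g x ≤ h x :=
  (isClosed_le hg hh).closure_subset_iff.2 hgh (dense_setOf_eval_ne_zero hP x)

lemma exists_mul_add_mul_eq_C_of_irreducible {R : Type*} [CommRing R] [IsDomain R]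
    [UniqueFactorizationMonoid R] {f q : Polynomial R} (hf : Irreducible f)
    (hdeg : f.natDegree ≠ 0) (hq : ¬f ∣ q) :
    ∃ a b r, r ≠ 0 ∧ f * a + q * b = Polynomial.C r := by
  let _ : NormalizedGCDMonoid R := Classical.choice inferInstance
  let K := FractionRing R
  have hinj : Function.Injective (algebraMap R K) := IsFractionRing.injective R K
  have hprim := hf.isPrimitive hdeg
  have hcoprime : IsCoprime (f.map (algebraMap R K)) (q.map (algebraMap R K)) :=
    (hprim.irreducible_iff_irreducible_map_fraction_map.1 hf).coprime_iff_not_dvd.2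
      fun h => hq (hprim.dvd_of_fraction_map_dvd_fraction_map h)
  have hres := Polynomial.resultant_ne_zero _ _ hcoprime
  rw [Polynomial.natDegree_map_eq_of_injective hinj, Polynomial.natDegree_map_eq_of_injective hinj,
    Polynomial.resultant_map_map] at hres
  obtain ⟨a, b, -, -, h⟩ :=
    Polynomial.exists_mul_add_mul_eq_C_resultant f q le_rfl le_rfl (.inl hdeg)
  exact ⟨a, b, _, fun h0 => hres (by rw [h0, map_zero]), h⟩

lemma exists_mul_add_mul_eq_rename_of_irreducible {K : Type*} [Field K] {f q : MvPolynomial σ K}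
    {i : σ} (hf : Irreducible f) (hi : f.degreeOf i ≠ 0) (hq : ¬f ∣ q) :
    ∃ a b, ∃ r : MvPolynomial {j // j ≠ i} K, r ≠ 0 ∧ f * a + q * b = rename Subtype.val r := by
  classical
  let e := (renameEquiv K (Equiv.optionSubtypeNe i).symm).trans (optionEquivLeft K {j // j ≠ i})
  have hdeg : (e f).natDegree ≠ 0 := by
    rwa [AlgEquiv.trans_apply, renameEquiv_apply, ← degreeOf_eq_natDegree]
  obtain ⟨a, b, r, hr, h⟩ := exists_mul_add_mul_eq_C_of_irreducible
    ((MulEquiv.irreducible_iff e).2 hf) hdeg fun h => hq ((map_dvd_iff e).1 h)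
  have he : e (rename Subtype.val r) = Polynomial.C r := by
    rw [AlgEquiv.trans_apply, renameEquiv_apply, rename_rename]
    clear h hr
    induction r using MvPolynomial.induction_on with
    | C c => rw [rename_C, optionEquivLeft_C]
    | add p q hp hq => rw [map_add, map_add, hp, hq, Polynomial.C_add]
    | mul_X p j hp =>
      rw [map_mul, map_mul, hp, rename_X, Function.comp_apply, Equiv.optionSubtypeNe_symm_of_ne j.2,
        optionEquivLeft_X_some, Polynomial.C_mul]
  refine ⟨e.symm a, e.symm b, r, hr, e.injective ?_⟩
  rw [map_add, map_mul, map_mul, e.apply_symm_apply, e.apply_symm_apply, h, he]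

lemma dvd_of_sign_change_update [Finite σ] [DecidableEq σ] {f q : MvPolynomial σ ℝ}
    (hf : Irreducible f) {x : σ → ℝ} {i : σ} {t : ℝ} (hneg : eval x f < 0)
    (hpos : 0 < eval (Function.update x i t) f) (hZ : ∀ y, eval y f = 0 → eval y q = 0) :
    f ∣ q := by
  by_contra hq
  have hi : f.degreeOf i ≠ 0 := fun hi => (hneg.trans hpos).ne <|
    hom_congr_vars (by ext; simp) (fun j hj _ => by
      have hji : j ≠ i := by rintro rfl; exact mem_vars_iff_degreeOf_ne_zero.1 hj hi
      simp [hji]) rfl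
  obtain ⟨a, b, r, hr, h⟩ := exists_mul_add_mul_eq_rename_of_irreducible hf hi hq
  have hline : ∀ s, Continuous fun z : σ → ℝ => eval (Function.update z i s) f := fun s =>
    (continuous_eval f).comp (by fun_prop)
  obtain ⟨z, ⟨hz_neg, hz_pos⟩, hz⟩ := (dense_setOf_eval_ne_zero
    ((rename_injective _ Subtype.val_injective).ne_iff' (map_zero _) |>.2 hr)).inter_open_nonempty
    {z | eval (Function.update z i (x i)) f < 0 ∧ 0 < eval (Function.update z i t) f}
    ((isOpen_lt (hline _) continuous_const).inter (isOpen_lt continuous_const (hline _)))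
    ⟨x, by simpa using hneg, hpos⟩
  obtain ⟨s, hs⟩ : ∃ s, eval (Function.update z i s) f = 0 :=
    mem_range_of_exists_le_of_exists_ge
      ((continuous_eval f).comp (by fun_prop : Continuous fun s => Function.update z i s))
      ⟨_, hz_neg.le⟩ ⟨_, hz_pos.le⟩
  have hz_line : Function.update z i s ∘ Subtype.val = z ∘ ((↑) : {j // j ≠ i} → σ) :=
    funext fun j => Function.update_of_ne j.2 _ _
  have hr0 := congrArg (eval (Function.update z i s)) h
  rw [map_add, map_mul, map_mul, hs, hZ _ hs, eval_rename, hz_line, ← eval_rename] at hr0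
  exact hz (by simpa using hr0.symm)

/-- Almost every choice of the two endpoints makes `f` nonzero at all the vertices of the box they
span, and one moves from one endpoint to the other along edges of the box. -/
lemma ChangesSign.exists_update [Finite σ] [DecidableEq σ] {f : MvPolynomial σ ℝ}
    (hf : ChangesSign f) :
    ∃ (x : σ → ℝ) (i : σ) (t : ℝ), eval x f < 0 ∧ 0 < eval (Function.update x i t) f := by
  cases nonempty_fintype σ
  obtain ⟨⟨x, hx⟩, ⟨y, hy⟩⟩ := hf
  have hf0 : f ≠ 0 := by rintro rfl; simp at hx
  let vertex (s : Finset σ) : σ → σ ⊕ σ := s.piecewise Sum.inr Sum.inl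
  have hvertex (s : Finset σ) : Function.Injective (vertex s) := by
    have (i : σ) : Sum.elim id id (vertex s i) = i := by
      by_cases hi : i ∈ s <;> simp [vertex, hi]
    exact Function.LeftInverse.injective this
  have hprod : ∏ s, rename (vertex s) f ≠ 0 := Finset.prod_ne_zero_iff.2 fun s _ =>
    (rename_injective _ (hvertex s)).ne_iff' (map_zero _) |>.2 hf0
  obtain ⟨z, ⟨hz_neg, hz_pos⟩, hz⟩ := (dense_setOf_eval_ne_zero hprod).inter_open_nonempty
    {z | eval (z ∘ Sum.inl) f < 0 ∧ 0 < eval (z ∘ Sum.inr) f}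
    (((continuous_eval f).comp (by fun_prop) |>.isOpen_preimage _ isOpen_Iio).inter
      ((continuous_eval f).comp (by fun_prop) |>.isOpen_preimage _ isOpen_Ioi))
    ⟨Sum.elim x y, by simpa using ⟨hx, hy⟩⟩
  by_contra! hno
  have hall (s : Finset σ) : eval (z ∘ vertex s) f < 0 := by
    induction s using Finset.induction_on with
    | empty => simpa [vertex] using hz_neg
    | insert a s ha ih =>
      have hedge : z ∘ vertex (insert a s) = Function.update (z ∘ vertex s) a (z (Sum.inr a)) := by
        rw [← Function.comp_update, ← Finset.piecewise_insert]
      have hne : eval (z ∘ vertex (insert a s)) f ≠ 0 := by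
        rw [Set.mem_ofPred_eq, map_prod] at hz
        rw [← eval_rename]
        exact Finset.prod_ne_zero_iff.1 hz _ (Finset.mem_univ _)
      exact (hedge ▸ hno _ a _ ih).lt_of_ne hne
  have := hall Finset.univ
  simp only [vertex, Finset.piecewise_univ] at this
  linarith

lemma dvd_of_changesSign [Finite σ] {f q : MvPolynomial σ ℝ} (hf : Irreducible f)
    (hsign : ChangesSign f) (hZ : ∀ x, eval x f = 0 → eval x q = 0) : f ∣ q := by
  classical
  obtain ⟨x, i, t, hneg, hpos⟩ := hsign.exists_update
  exact dvd_of_sign_change_update hf hneg hpos hZ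

lemma dvd_of_abs_eval_le [Finite σ] {P Q : MvPolynomial σ ℝ} (hP : P ≠ 0)
    (hsign : ∀ f, Irreducible f → f ∣ P → ChangesSign f) {K : (σ → ℝ) → ℝ} (hK : Continuous K)
    (hle : ∀ x, |eval x Q| ≤ K x * |eval x P|) : P ∣ Q := by
  induction P using WfDvdMonoid.induction_on_irreducible generalizing Q with
  | zero => exact absurd rfl hP
  | unit u hu => exact hu.dvd
  | mul P f hP0 hf ih =>
    obtain ⟨Q, rfl⟩ : f ∣ Q := dvd_of_changesSign hf (hsign f hf (dvd_mul_right f P)) fun x hx =>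
      abs_nonpos_iff.1 (by simpa [hx] using hle x)
    refine mul_dvd_mul_left f (ih hP0 (fun g hg hgP => hsign g hg (hgP.mul_left f)) ?_)
    refine le_of_forall_eval_ne_zero hf.ne_zero (continuous_eval Q).abs
      (hK.mul (continuous_eval P).abs) fun x hx => le_of_mul_le_mul_left ?_ (abs_pos.2 hx)
    have := hle x
    rw [map_mul, map_mul, abs_mul, abs_mul] at this
    linarith

end ZeroSets

section HomogeneousComponents

open MvPolynomial

variable {σ : Type*}

section CommSemiring

variable {R : Type*} [CommSemiring R] {f : MvPolynomial σ R}

lemma homogeneousComponent_totalDegree_ne_zero (hf : f ≠ 0) :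
    homogeneousComponent f.totalDegree f ≠ 0 := by
  obtain ⟨d, hd, hdeg⟩ := f.support.exists_mem_eq_sup (support_nonempty.2 hf) Finsupp.degree
  refine ne_zero_iff.2 ⟨d, ?_⟩
  rwa [coeff_homogeneousComponent, if_pos (show d.degree = f.totalDegree from hdeg.symm),
    ← mem_support_iff]

lemma eval_smul_of_isHomogeneous {k : ℕ} (hf : f.IsHomogeneous k) (t : R) (x : σ → R) :
    eval (t • x) f = t ^ k * eval x f := by
  rw [eval_eq, eval_eq, Finset.mul_sum]
  refine Finset.sum_congr rfl fun d hd => ?_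
  have hdeg : ∑ i ∈ d.support, d i = k :=
    not_imp_comm.1 hf.coeff_eq_zero (mem_support_iff.1 hd)
  simp only [Pi.smul_apply, smul_eq_mul, mul_pow, Finset.prod_mul_distrib]
  rw [Finset.prod_pow_eq_pow_sum, hdeg, mul_left_comm]

lemma eval_smul_eq_sum_homogeneousComponent (f : MvPolynomial σ R) (t : R) (x : σ → R) :
    eval (t • x) f =
      ∑ k ∈ Finset.range (f.totalDegree + 1), t ^ k * eval x (homogeneousComponent k f) := by
  conv_lhs => rw [← sum_homogeneousComponent f, map_sum]
  exact Finset.sum_congr rfl fun k _ =>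
    eval_smul_of_isHomogeneous (homogeneousComponent_isHomogeneous k f) t x

lemma pderiv_homogeneousComponent_succ (f : MvPolynomial σ R) (i : σ) (k : ℕ) :
    pderiv i (homogeneousComponent (k + 1) f) = homogeneousComponent k (pderiv i f) := by
  ext d
  simp [coeff_pderiv, coeff_homogeneousComponent]

end CommSemiring

lemma tendsto_eval_smul_div_pow (f : MvPolynomial σ ℝ) (x : σ → ℝ) :
    Tendsto (fun t : ℝ => eval (t • x) f / t ^ f.totalDegree) atTop
      (nhds (eval x (homogeneousComponent f.totalDegree f))) := by
  have hlower : Tendsto (fun t : ℝ => ∑ k ∈ Finset.range f.totalDegree,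
      t ^ k / t ^ f.totalDegree * eval x (homogeneousComponent k f)) atTop (nhds 0) := by
    rw [← Finset.sum_const_zero (s := Finset.range f.totalDegree)]
    refine tendsto_finsetSum _ fun k hk => ?_
    rw [← zero_mul (eval x (homogeneousComponent k f))]
    exact (tendsto_pow_div_pow_atTop_zero (Finset.mem_range.1 hk)).mul_const _
  have := hlower.add_const (eval x (homogeneousComponent f.totalDegree f))
  rw [zero_add] at this
  refine this.congr' ?_
  filter_upwards [eventually_ne_atTop 0] with t ht
  rw [eval_smul_eq_sum_homogeneousComponent, Finset.sum_range_succ, add_div, Finset.sum_div,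
    mul_div_cancel_left₀ _ (pow_ne_zero _ ht)]
  simp only [div_mul_eq_mul_div]

lemma homogeneousComponent_totalDegree_mul {f g : MvPolynomial σ ℝ} (hf : f ≠ 0) (hg : g ≠ 0) :
    homogeneousComponent (f * g).totalDegree (f * g) =
      homogeneousComponent f.totalDegree f * homogeneousComponent g.totalDegree g := by
  refine MvPolynomial.funext fun x => ?_
  refine tendsto_nhds_unique (tendsto_eval_smul_div_pow (f * g) x) ?_
  rw [map_mul (eval x)]
  refine ((tendsto_eval_smul_div_pow f x).mul (tendsto_eval_smul_div_pow g x)).congr fun t => ?_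
  rw [totalDegree_mul_of_isDomain hf hg, map_mul, pow_add, mul_div_mul_comm]

lemma IsHarmonicPoly.homogeneousComponent {n : ℕ} {P : MvPolynomial (Fin n) ℝ}
    (hP : IsHarmonicPoly P) (k : ℕ) : IsHarmonicPoly (homogeneousComponent k P) := by
  rw [IsHarmonicPoly] at *
  match k with
  | 0 => simp only [homogeneousComponent_zero, pderiv_C, map_zero, Finset.sum_const_zero]
  | 1 =>
    simp only [pderiv_homogeneousComponent_succ P _ 0, homogeneousComponent_zero, pderiv_C,
      Finset.sum_const_zero]
  | k + 2 => simp only [pderiv_homogeneousComponent_succ, ← map_sum, hP, map_zero]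

end HomogeneousComponents

section PolynomialFunctions

open MvPolynomial

variable {n : ℕ}

/-- The `i`-th partial derivative of a function on `ℝⁿ`, in the form in which it enters `lapl`. -/
noncomputable def partialDeriv (i : Fin n) (f : EuclideanSpace ℝ (Fin n) → ℝ)
    (x : EuclideanSpace ℝ (Fin n)) : ℝ :=
  fderiv ℝ f x (EuclideanSpace.single i 1)

lemma contDiff_polyFun (P : MvPolynomial (Fin n) ℝ) {k : WithTop ℕ∞} :
    ContDiff ℝ k (polyFun P) := by
  unfold polyFun
  simp only [eval_eq]
  fun_prop

lemma partialDeriv_polyFun (i : Fin n) (P : MvPolynomial (Fin n) ℝ) :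
    partialDeriv i (polyFun P) = polyFun (pderiv i P) := by
  funext x
  have hdiff (p : MvPolynomial (Fin n) ℝ) : DifferentiableAt ℝ (polyFun p) x :=
    (contDiff_polyFun p (k := 1)).differentiable one_ne_zero x
  induction P using MvPolynomial.induction_on with
  | C a =>
    have : polyFun (C a : MvPolynomial (Fin n) ℝ) = fun _ => a := by funext y; simp [polyFun]
    simp [partialDeriv, this, polyFun]
  | add p q hp hq =>
    have : polyFun (p + q) = polyFun p + polyFun q := by funext y; simp [polyFun]
    rw [partialDeriv, this, fderiv_add (hdiff p) (hdiff q)]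
    simp_all [partialDeriv, polyFun]
  | mul_X p j hp =>
    have hX : polyFun (X j : MvPolynomial (Fin n) ℝ) = EuclideanSpace.proj (𝕜 := ℝ) j := by
      funext y; simp [polyFun]
    have : polyFun (p * X j) = polyFun p * polyFun (X j) := by funext y; simp [polyFun]
    rw [partialDeriv, this, fderiv_mul (hdiff p) (hdiff _), hX, ContinuousLinearMap.fderiv]
    rw [partialDeriv] at hp
    simp [hp, polyFun, pderiv_X, Pi.single_apply, apply_ite]

lemma abs_polyFun_le (P : MvPolynomial (Fin n) ℝ) (x : EuclideanSpace ℝ (Fin n)) :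
    |polyFun P x| ≤ (∑ d ∈ P.support, |coeff d P|) * (1 + ‖x‖) ^ P.totalDegree := by
  have hcoord (i : Fin n) : |x i| ≤ 1 + ‖x‖ :=
    (PiLp.norm_apply_le x i).trans (le_add_of_nonneg_left zero_le_one)
  rw [polyFun, eval_eq, Finset.sum_mul]
  refine (Finset.abs_sum_le_sum_abs _ _).trans (Finset.sum_le_sum fun d hd => ?_)
  rw [abs_mul, Finset.abs_prod]
  refine mul_le_mul_of_nonneg_left ?_ (abs_nonneg _)
  calc ∏ i ∈ d.support, |x i ^ d i| ≤ ∏ i ∈ d.support, (1 + ‖x‖) ^ d i := by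
        gcongr with i
        rw [abs_pow]
        gcongr
        exact hcoord i
    _ = (1 + ‖x‖) ^ ∑ i ∈ d.support, d i := Finset.prod_pow_eq_pow_sum _ _ _
    _ ≤ (1 + ‖x‖) ^ P.totalDegree :=
        pow_le_pow_right₀ (by simp) (le_totalDegree hd)

end PolynomialFunctions

section RadialKernels

open scoped ContDiff RealInnerProductSpace

/-- The profiles `h` of the smooth radial kernels `y ↦ h (‖y‖ ^ 2)` supported in the unit ball. -/
structure IsRadialProfile (h : ℝ → ℝ) : Prop where
  contDiff : ContDiff ℝ ∞ h
  eq_zero : ∀ s, 1 ≤ s → h s = 0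

/-- The radial kernel with profile `h`. The norm is squared so that smoothness of the profile alone
makes the kernel smooth. -/
def radialKernel {E : Type*} [Norm E] (h : ℝ → ℝ) (y : E) : ℝ :=
  h (‖y‖ ^ 2)

/-- A nonnegative radial profile which is positive on `[0, 1)`. -/
noncomputable def bumpProfile (s : ℝ) : ℝ :=
  Real.smoothTransition (1 - s)

lemma isRadialProfile_bumpProfile : IsRadialProfile bumpProfile where
  contDiff := Real.smoothTransition.contDiff.comp (contDiff_const.sub contDiff_id)
  eq_zero _ hs := Real.smoothTransition.zero_of_nonpos (by linarith)

namespace IsRadialProfile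

variable {h : ℝ → ℝ}

protected lemma deriv (hh : IsRadialProfile h) : IsRadialProfile (deriv h) where
  contDiff := (contDiff_infty_iff_deriv.1 hh.contDiff).2
  eq_zero s hs := by
    have hdiff := (contDiff_infty_iff_deriv.1 hh.contDiff).1 s
    exact (uniqueDiffOn_Ici 1 s hs).eq_deriv _ hdiff.hasDerivAt.hasDerivWithinAt
      ((hasDerivWithinAt_const s _ 0).congr hh.eq_zero (hh.eq_zero s hs))

lemma exists_deriv_eq (hh : IsRadialProfile h) : ∃ H, IsRadialProfile H ∧ deriv H = h := by
  have hcont := hh.contDiff.continuous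
  have hderiv (s : ℝ) : HasDerivAt (fun s => ∫ t in (1 : ℝ)..s, h t) (h s) s :=
    intervalIntegral.integral_hasDerivAt_right (hcont.intervalIntegrable _ _)
      (hcont.stronglyMeasurableAtFilter _ _) hcont.continuousAt
  have hderiv_eq : deriv (fun s => ∫ t in (1 : ℝ)..s, h t) = h :=
    funext fun s => (hderiv s).deriv
  refine ⟨_, ⟨?_, fun s hs => ?_⟩, hderiv_eq⟩
  · rw [contDiff_infty_iff_deriv, hderiv_eq]
    exact ⟨fun s => (hderiv s).differentiableAt, hh.contDiff⟩
  · refine intervalIntegral.integral_zero_ae (Eventually.of_forall fun t ht => ?_)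
    rw [Set.uIoc_of_le hs] at ht
    exact hh.eq_zero t ht.1.le

variable {E : Type*} [NormedAddCommGroup E]

lemma radialKernel_eq_zero (hh : IsRadialProfile h) {y : E} (hy : 1 ≤ ‖y‖) :
    radialKernel h y = 0 :=
  hh.eq_zero _ (one_le_pow₀ hy)

lemma continuous_radialKernel (hh : IsRadialProfile h) : Continuous (radialKernel h : E → ℝ) :=
  hh.contDiff.continuous.comp (continuous_norm.pow 2)

lemma hasCompactSupport_radialKernel [ProperSpace E] (hh : IsRadialProfile h) :
    HasCompactSupport (radialKernel h : E → ℝ) :=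
  HasCompactSupport.intro (isCompact_closedBall 0 1) fun y hy =>
    hh.radialKernel_eq_zero (by simpa using (not_le.1 (mt mem_closedBall_zero_iff.2 hy)).le)

section Integrals

variable [MeasurableSpace E] [BorelSpace E] {μ : Measure E}

lemma integrable_mul_radialKernel [ProperSpace E] [IsFiniteMeasureOnCompacts μ]
    (hh : IsRadialProfile h) {f : E → ℝ} (hf : Continuous f) :
    Integrable (fun y => f y * radialKernel h y) μ :=
  (hf.mul hh.continuous_radialKernel).integrable_of_hasCompactSupport
    hh.hasCompactSupport_radialKernel.mul_left

end Integrals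

variable [InnerProductSpace ℝ E]

lemma contDiff_radialKernel (hh : IsRadialProfile h) : ContDiff ℝ ∞ (radialKernel h : E → ℝ) :=
  hh.contDiff.comp (contDiff_norm_sq ℝ)

lemma fderiv_radialKernel (hh : IsRadialProfile h) (y e : E) :
    fderiv ℝ (radialKernel h) y e = 2 * ⟪y, e⟫ * radialKernel (deriv h) y := by
  have hderiv := ((contDiff_infty_iff_deriv.1 hh.contDiff).1 (‖y‖ ^ 2)).hasDerivAt
  have hcomp : HasFDerivAt (radialKernel h) _ y :=
    hderiv.comp_hasFDerivAt y (hasStrictFDerivAt_norm_sq y).hasFDerivAt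
  rw [hcomp.fderiv]
  simp only [radialKernel, smul_apply, coe_innerSL_apply, nsmul_eq_mul, Nat.cast_ofNat,
    smul_eq_mul]
  ring

lemma integral_inner_mul_radialKernel_deriv [FiniteDimensional ℝ E] [MeasurableSpace E]
    [BorelSpace E] {μ : Measure E} [μ.IsAddHaarMeasure] (hh : IsRadialProfile h) {f : E → ℝ}
    (hf : ContDiff ℝ 1 f) (e : E) :
    2 * ∫ y, ⟪y, e⟫ * f y * radialKernel (deriv h) y ∂μ =
      -∫ y, fderiv ℝ f y e * radialKernel h y ∂μ := by
  have : ProperSpace E := FiniteDimensional.proper_real E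
  have heq (y : E) : 2 * (⟪y, e⟫ * f y * radialKernel (deriv h) y) =
      f y * fderiv ℝ (radialKernel h) y e := by
    rw [hh.fderiv_radialKernel]; ring
  rw [← integral_const_mul]
  simp only [heq]
  refine integral_mul_fderiv_eq_neg_fderiv_mul_of_integrable ?_ ?_ ?_ ?_ ?_
  · exact hh.integrable_mul_radialKernel
      ((hf.continuous_fderiv one_ne_zero).clm_apply continuous_const)
  · simp only [← heq]
    exact (hh.deriv.integrable_mul_radialKernel (by fun_prop)).const_mul 2
  · exact hh.integrable_mul_radialKernel hf.continuous
  · exact fun x _ => hf.differentiable one_ne_zero x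
  · exact fun x _ => hh.contDiff_radialKernel.differentiable (by simp) x

end IsRadialProfile

lemma integral_mul_radialKernel_bumpProfile_pos {E : Type*} [NormedAddCommGroup E] [ProperSpace E]
    [MeasurableSpace E] [BorelSpace E] {μ : Measure E} [μ.IsOpenPosMeasure]
    [IsFiniteMeasureOnCompacts μ] {f : E → ℝ} (hf : Continuous f) (hnonneg : ∀ y, 0 ≤ f y) {x : E}
    (hx : ‖x‖ < 1) (hfx : f x ≠ 0) : 0 < ∫ y, f y * radialKernel bumpProfile y ∂μ := by
  have hbump := isRadialProfile_bumpProfile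
  refine (hf.mul hbump.continuous_radialKernel).integral_pos_of_hasCompactSupport_nonneg_nonzero
    (x := x) hbump.hasCompactSupport_radialKernel.mul_left
    (fun y => mul_nonneg (hnonneg y) (Real.smoothTransition.nonneg _)) (mul_ne_zero hfx ?_)
  have hsq : ‖x‖ ^ 2 < 1 := pow_lt_one₀ (norm_nonneg x) hx two_ne_zero
  exact (Real.smoothTransition.pos_of_pos (sub_pos.2 hsq)).ne'

lemma integral_radialKernel_bumpProfile_pos {E : Type*} [NormedAddCommGroup E] [ProperSpace E]
    [MeasurableSpace E] [BorelSpace E] {μ : Measure E} [μ.IsOpenPosMeasure]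
    [IsFiniteMeasureOnCompacts μ] : 0 < ∫ y : E, radialKernel bumpProfile y ∂μ := by
  simpa using integral_mul_radialKernel_bumpProfile_pos (μ := μ) (continuous_const (y := (1 : ℝ)))
    (fun _ => zero_le_one) (x := (0 : E)) (by simp) one_ne_zero

lemma IsRadialProfile.integral_coord_mul_radialKernel_deriv {n : ℕ} {h : ℝ → ℝ}
    (hh : IsRadialProfile h) {f : EuclideanSpace ℝ (Fin n) → ℝ} (hf : ContDiff ℝ 1 f) (i : Fin n) :
    2 * ∫ y, y i * f y * radialKernel (deriv h) y =
      -∫ y, partialDeriv i f y * radialKernel h y := by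
  have := hh.integral_inner_mul_radialKernel_deriv (μ := volume) hf (EuclideanSpace.single i 1)
  simpa only [partialDeriv, EuclideanSpace.inner_single_right, one_mul, conj_trivial] using this

end RadialKernels

section BrelotChoquet

open MvPolynomial

variable {n : ℕ} {h : ℝ → ℝ}

/-- Integration of polynomials against the radial kernel with profile `h`, as a linear form; it
plays the role of integration over the sphere. -/
noncomputable def radialMoment (hh : IsRadialProfile h) : MvPolynomial (Fin n) ℝ →ₗ[ℝ] ℝ where
  toFun Q := ∫ y, polyFun Q y * radialKernel h y
  map_add' p q := by
    rw [← integral_add (hh.integrable_mul_radialKernel (contDiff_polyFun p (k := 0)).continuous)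
      (hh.integrable_mul_radialKernel (contDiff_polyFun q (k := 0)).continuous)]
    simp only [polyFun, map_add, add_mul]
  map_smul' c p := by
    simp only [polyFun, smul_eval, mul_assoc, RingHom.id_apply, smul_eq_mul, integral_const_mul]

lemma radialMoment_deriv_X_mul (hh : IsRadialProfile h) (i : Fin n) (Q : MvPolynomial (Fin n) ℝ) :
    2 * radialMoment hh.deriv (X i * Q) = -radialMoment hh (pderiv i Q) := by
  have := hh.integral_coord_mul_radialKernel_deriv (contDiff_polyFun Q) i
  simpa only [radialMoment, LinearMap.coe_mk, AddHom.coe_mk, polyFun, map_mul, eval_X,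
    partialDeriv_polyFun] using this

lemma natCast_mul_radialMoment_deriv_mul (hh : IsRadialProfile h) {A : MvPolynomial (Fin n) ℝ}
    {m : ℕ} (hA : A.IsHomogeneous m) (B : MvPolynomial (Fin n) ℝ) :
    m * (2 * radialMoment hh.deriv (A * B)) =
      -radialMoment hh (∑ i, pderiv i A * pderiv i B)
        - radialMoment hh ((∑ i, pderiv i (pderiv i A)) * B) := by
  have heuler : m * radialMoment hh.deriv (A * B) =
      ∑ i, radialMoment hh.deriv (X i * (pderiv i A * B)) := by
    simp only [← mul_assoc]
    rw [← map_sum, ← Finset.sum_mul, hA.sum_X_mul_pderiv, smul_mul_assoc, map_nsmul, nsmul_eq_mul]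
  rw [mul_left_comm, heuler, Finset.mul_sum]
  simp only [radialMoment_deriv_X_mul hh, pderiv_mul]
  rw [Finset.sum_neg_distrib, ← map_sum, Finset.sum_add_distrib, ← Finset.sum_mul, map_add]
  ring

/-- Euler's identity for either factor rewrites `radialMoment hh (P * G)`; the two expressions
differ by the moment of `P` against the Laplacian of `G`, which has smaller degree. -/
lemma IsHarmonicPoly.radialMoment_mul_eq_zero {P : MvPolynomial (Fin n) ℝ} {m : ℕ}
    (hP : IsHarmonicPoly P) (hPm : P.IsHomogeneous m) {G : MvPolynomial (Fin n) ℝ} {k : ℕ}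
    (hGk : G.IsHomogeneous k) (hkm : k < m) (hh : IsRadialProfile h) :
    radialMoment hh (P * G) = 0 := by
  induction k using Nat.strong_induction_on generalizing G h with
  | _ k ih =>
  obtain ⟨H, hH, rfl⟩ := hh.exists_deriv_eq
  have hlapl : radialMoment hH ((∑ i, pderiv i (pderiv i G)) * P) = 0 := by
    obtain rfl | hk := Nat.eq_zero_or_pos k
    · rw [totalDegree_eq_zero_iff_eq_C.1 ((totalDegree_zero_iff_isHomogeneous _).2 hGk)]
      simp
    · rw [mul_comm]
      exact ih (k - 1 - 1) (by omega) (IsHomogeneous.sum _ _ _ fun i _ => hGk.pderiv.pderiv)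
        (by omega) hH
  have heuler_P := natCast_mul_radialMoment_deriv_mul hH hPm G
  have heuler_G := natCast_mul_radialMoment_deriv_mul hH hGk P
  rw [hP, zero_mul, map_zero, sub_zero] at heuler_P
  rw [hlapl, sub_zero, mul_comm G P] at heuler_G
  simp only [mul_comm (pderiv _ G)] at heuler_G
  have hne : (m : ℝ) - k ≠ 0 := sub_ne_zero.2 (by exact_mod_cast hkm.ne')
  refine (mul_eq_zero.1 (?_ : ((m : ℝ) - k) * radialMoment hh (P * G) = 0)).resolve_left hne
  linarith

/-- If `F` and `G` are the leading forms of `f` and `g`, then `F * G` is harmonic, hence orthogonal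
to `G` unless `F` is constant, while `F * G ^ 2` is nonnegative. -/
lemma IsHarmonicPoly.totalDegree_eq_zero_of_eval_nonneg {f g : MvPolynomial (Fin n) ℝ}
    (hfg : f * g ≠ 0) (hharm : IsHarmonicPoly (f * g)) (hf : ∀ x, 0 ≤ eval x f) :
    f.totalDegree = 0 := by
  by_contra hdeg
  have hf0 := left_ne_zero_of_mul hfg
  have hg0 := right_ne_zero_of_mul hfg
  set F := MvPolynomial.homogeneousComponent f.totalDegree f
  set G := MvPolynomial.homogeneousComponent g.totalDegree g
  have hF_nonneg (x : Fin n → ℝ) : 0 ≤ eval x F := by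
    refine ge_of_tendsto (tendsto_eval_smul_div_pow f x) ?_
    filter_upwards [eventually_gt_atTop 0] with t ht
    exact div_nonneg (hf _) (by positivity)
  have hFG : IsHarmonicPoly (F * G) := by
    rw [← homogeneousComponent_totalDegree_mul hf0 hg0]
    exact hharm.homogeneousComponent _
  have hG_hom := homogeneousComponent_isHomogeneous g.totalDegree g
  have horth : radialMoment isRadialProfile_bumpProfile (F * G * G) = 0 :=
    hFG.radialMoment_mul_eq_zero
      ((homogeneousComponent_isHomogeneous f.totalDegree f).mul hG_hom) hG_hom (by omega) _
  have hFGG0 : F * G * G ≠ 0 :=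
    mul_ne_zero (mul_ne_zero (homogeneousComponent_totalDegree_ne_zero hf0)
      (homogeneousComponent_totalDegree_ne_zero hg0)) (homogeneousComponent_totalDegree_ne_zero hg0)
  obtain ⟨x, hx, hx0⟩ := (dense_setOf_eval_ne_zero hFGG0).inter_open_nonempty
    {x | ‖(WithLp.toLp 2 x : EuclideanSpace ℝ (Fin n))‖ < 1}
    (isOpen_lt (by fun_prop) continuous_const) ⟨0, by simp⟩
  refine (integral_mul_radialKernel_bumpProfile_pos (contDiff_polyFun _ (k := 0)).continuous
    (fun y => ?_) hx hx0).ne' horth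
  simp only [polyFun, map_mul, mul_assoc]
  exact mul_nonneg (hF_nonneg _) (mul_self_nonneg _)

lemma IsHarmonicPoly.changesSign_of_irreducible_of_dvd {P f : MvPolynomial (Fin n) ℝ}
    (hP0 : P ≠ 0) (hP : IsHarmonicPoly P) (hf : Irreducible f) (hfP : f ∣ P) : ChangesSign f := by
  obtain ⟨g, rfl⟩ := hfP
  have hdeg : f.totalDegree ≠ 0 := fun h0 => hf.not_isUnit <|
    isUnit_iff_totalDegree_of_isReduced.2 ⟨isUnit_iff_ne_zero.2 fun hc => hf.ne_zero <| by
      rw [totalDegree_eq_zero_iff_eq_C.1 h0, hc, C_0], h0⟩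
  constructor
  · by_contra! hf_nonneg
    exact hdeg (hP.totalDegree_eq_zero_of_eval_nonneg hP0 hf_nonneg)
  · by_contra! hf_nonpos
    rw [← neg_mul_neg] at hP hP0
    refine hdeg ((totalDegree_neg f).symm.trans
      (hP.totalDegree_eq_zero_of_eval_nonneg hP0 fun x => ?_))
    simpa only [map_neg, neg_nonneg] using hf_nonpos x

end BrelotChoquet

section PartialDerivatives

variable {n : ℕ} {f : EuclideanSpace ℝ (Fin n) → ℝ}

lemma fderiv_eq_sum_partialDeriv (f : EuclideanSpace ℝ (Fin n) → ℝ)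
    (x y : EuclideanSpace ℝ (Fin n)) : fderiv ℝ f x y = ∑ i, y i * partialDeriv i f x := by
  conv_lhs => rw [← (EuclideanSpace.basisFun (Fin n) ℝ).sum_repr y, map_sum]
  simp [partialDeriv]

lemma contDiff_partialDeriv {k m : WithTop ℕ∞} (i : Fin n) (hf : ContDiff ℝ k f)
    (hmk : m + 1 ≤ k) : ContDiff ℝ m (partialDeriv i f) :=
  (hf.fderiv_right hmk).clm_apply contDiff_const

lemma partialDeriv_comm (i j : Fin n) (hf : ContDiff ℝ 2 f) :
    partialDeriv i (partialDeriv j f) = partialDeriv j (partialDeriv i f) := by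
  funext x
  have hdiff : DifferentiableAt ℝ (fderiv ℝ f) x :=
    (hf.fderiv_right (m := 1) (by norm_num)).differentiable one_ne_zero x
  have hsecond (i j : Fin n) : partialDeriv i (partialDeriv j f) x =
      fderiv ℝ (fderiv ℝ f) x (EuclideanSpace.single i 1) (EuclideanSpace.single j 1) := by
    unfold partialDeriv
    rw [fderiv_clm_apply hdiff (differentiableAt_const _)]
    simp
  rw [hsecond, hsecond]
  exact hf.contDiffAt.isSymmSndFDerivAt (by simp) _ _

lemma partialDeriv_comp_add_smul (i : Fin n) (hf : Differentiable ℝ f)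
    (x : EuclideanSpace ℝ (Fin n)) (r : ℝ) (y : EuclideanSpace ℝ (Fin n)) :
    partialDeriv i (fun y => f (x + r • y)) y = r * partialDeriv i f (x + r • y) := by
  have haffine : HasFDerivAt (fun y : EuclideanSpace ℝ (Fin n) => x + r • y)
      (r • ContinuousLinearMap.id ℝ _) y := ((hasFDerivAt_id y).const_smul r).const_add x
  have hcomp : HasFDerivAt (fun y => f (x + r • y)) _ y :=
    (hf (x + r • y)).hasFDerivAt.comp y haffine
  rw [partialDeriv, hcomp.fderiv]
  simp [partialDeriv]

lemma lapl_partialDeriv (i : Fin n) (hf : ContDiff ℝ 3 f) (x : EuclideanSpace ℝ (Fin n)) :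
    lapl (partialDeriv i f) x = partialDeriv i (lapl f) x := by
  have hfst (j : Fin n) : ContDiff ℝ 2 (partialDeriv j f) :=
    contDiff_partialDeriv j hf (by norm_num)
  have hsnd (j : Fin n) : DifferentiableAt ℝ (partialDeriv j (partialDeriv j f)) x :=
    (contDiff_partialDeriv j (hfst j) (m := 1) (by norm_num)).differentiable one_ne_zero x
  calc lapl (partialDeriv i f) x
      = ∑ j, partialDeriv j (partialDeriv j (partialDeriv i f)) x := rfl
    _ = ∑ j, partialDeriv i (partialDeriv j (partialDeriv j f)) x := by
        refine Finset.sum_congr rfl fun j _ => ?_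
        rw [partialDeriv_comm j i (hf.of_le (by norm_num)), partialDeriv_comm j i (hfst j)]
    _ = partialDeriv i (fun y => ∑ j, partialDeriv j (partialDeriv j f) y) x := by
        rw [partialDeriv, fderiv_fun_sum fun j _ => hsnd j, sum_apply]
        rfl

end PartialDerivatives

section MeanValue

open scoped ContDiff

lemma hasDerivAt_integral_comp_add_smul_mul {E : Type*} [NormedAddCommGroup E] [NormedSpace ℝ E]
    [MeasurableSpace E] [BorelSpace E] {μ : Measure E} [IsFiniteMeasureOnCompacts μ] {v φ : E → ℝ}
    (hv : ContDiff ℝ 1 v) (hφ : Continuous φ) (hφ_supp : HasCompactSupport φ) (x : E) (r : ℝ) :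
    HasDerivAt (fun r : ℝ => ∫ y, v (x + r • y) * φ y ∂μ)
      (∫ y, fderiv ℝ v (x + r • y) y * φ y ∂μ) r := by
  have hintegrable {g : E → ℝ} (hg : Continuous g) : Integrable (fun y => g y * φ y) μ :=
    (hg.mul hφ).integrable_of_hasCompactSupport hφ_supp.mul_left
  have hvr (r : ℝ) : Continuous fun y => v (x + r • y) := hv.continuous.comp (by fun_prop)
  have hfderiv : Continuous fun p : ℝ × E => fderiv ℝ v (x + p.1 • p.2) p.2 :=
    ((hv.continuous_fderiv one_ne_zero).comp (by fun_prop)).clm_apply continuous_snd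
  obtain ⟨M, hM⟩ := ((isCompact_closedBall r 1).prod hφ_supp).exists_bound_of_continuousOn
    hfderiv.continuousOn
  refine (hasDerivAt_integral_of_dominated_loc_of_deriv_le (bound := fun y => M * |φ y|)
    (F' := fun r y => fderiv ℝ v (x + r • y) y * φ y) (ball_mem_nhds r one_pos)
    (Eventually.of_forall fun r => (hintegrable (hvr r)).aestronglyMeasurable)
    (hintegrable (hvr r)) (hintegrable ?_).aestronglyMeasurable ?_ ?_ ?_).2
  · exact hfderiv.comp (by fun_prop : Continuous fun y : E => (r, y))
  · refine Eventually.of_forall fun y s hs => ?_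
    by_cases hy : φ y = 0
    · simp [hy]
    · rw [norm_mul, Real.norm_eq_abs (φ y)]
      exact mul_le_mul_of_nonneg_right
        (hM (s, y) ⟨ball_subset_closedBall hs, subset_closure hy⟩) (abs_nonneg _)
  · simpa using (hintegrable continuous_one).abs.const_mul M
  · refine Eventually.of_forall fun y s _ => HasDerivAt.mul_const ?_ _
    have hline : HasDerivAt (fun r : ℝ => x + r • y) y s := by
      simpa using ((hasDerivAt_id s).smul_const y).const_add x
    exact (hv.differentiable one_ne_zero _).hasFDerivAt.comp_hasDerivAt s hline

namespace HarmonicFn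

variable {n : ℕ} {v : EuclideanSpace ℝ (Fin n) → ℝ} {h : ℝ → ℝ}

/-- Integrating by parts turns the radial derivative of `v` into its Laplacian. -/
lemma integral_fderiv_mul_radialKernel_eq_zero (hv : HarmonicFn v) (hh : IsRadialProfile h)
    (x : EuclideanSpace ℝ (Fin n)) (r : ℝ) :
    ∫ y, fderiv ℝ v (x + r • y) y * radialKernel h y = 0 := by
  obtain ⟨H, hH, rfl⟩ := hh.exists_deriv_eq
  have hfst (i : Fin n) : ContDiff ℝ 1 (partialDeriv i v) :=
    contDiff_partialDeriv i hv.1 (by norm_num)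
  have hdilate {k : WithTop ℕ∞} {g : EuclideanSpace ℝ (Fin n) → ℝ} (hg : ContDiff ℝ k g) :
      ContDiff ℝ k fun y => g (x + r • y) := hg.comp (by fun_prop)
  have hibp (i : Fin n) :
      2 * ∫ y, y i * partialDeriv i v (x + r • y) * radialKernel (deriv H) y =
        -∫ y, r * partialDeriv i (partialDeriv i v) (x + r • y) * radialKernel H y := by
    rw [hH.integral_coord_mul_radialKernel_deriv (hdilate (hfst i)) i]
    simp only [partialDeriv_comp_add_smul i ((hfst i).differentiable one_ne_zero)]
  have hlapl (y : EuclideanSpace ℝ (Fin n)) :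
      ∑ i, partialDeriv i (partialDeriv i v) (x + r • y) = 0 := hv.2 _
  suffices 2 * ∫ y, fderiv ℝ v (x + r • y) y * radialKernel (deriv H) y = 0 by linarith
  simp only [fderiv_eq_sum_partialDeriv, Finset.sum_mul]
  rw [integral_finsetSum, Finset.mul_sum, Finset.sum_congr rfl fun i _ => hibp i,
    Finset.sum_neg_distrib, ← integral_finsetSum]
  · simp only [← Finset.sum_mul, ← Finset.mul_sum, hlapl, mul_zero, zero_mul, integral_zero,
      neg_zero]
  · exact fun i _ => hH.integrable_mul_radialKernel <| continuous_const.mul <|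
      (hdilate (contDiff_partialDeriv (m := 0) i (hfst i) (by norm_num))).continuous
  · exact fun i _ => hh.integrable_mul_radialKernel <|
      Continuous.mul (by fun_prop) (hdilate (hfst i)).continuous

lemma integral_comp_add_smul_mul_radialKernel (hv : HarmonicFn v) (hh : IsRadialProfile h)
    (x : EuclideanSpace ℝ (Fin n)) (r : ℝ) :
    ∫ y, v (x + r • y) * radialKernel h y =
      v x * ∫ y : EuclideanSpace ℝ (Fin n), radialKernel h y := by
  have hderiv (r : ℝ) : HasDerivAt (fun r : ℝ => ∫ y, v (x + r • y) * radialKernel h y) 0 r := by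
    rw [← hv.integral_fderiv_mul_radialKernel_eq_zero hh x r]
    exact hasDerivAt_integral_comp_add_smul_mul (hv.1.of_le one_le_two)
      hh.continuous_radialKernel hh.hasCompactSupport_radialKernel x r
  rw [is_const_of_deriv_eq_zero (fun r => (hderiv r).differentiableAt)
    (fun r => (hderiv r).deriv) r 0]
  simp only [zero_smul, add_zero, integral_const_mul]

/-- By the mean value property `v` is a multiple of its convolution with a smooth kernel. -/
protected lemma contDiff (hv : HarmonicFn v) : ContDiff ℝ ∞ v := by
  have hbump := isRadialProfile_bumpProfile
  have hconv : v = fun x => (∫ y : EuclideanSpace ℝ (Fin n), radialKernel bumpProfile y)⁻¹ *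
      convolution (radialKernel bumpProfile) v (ContinuousLinearMap.mul ℝ ℝ) volume x := by
    funext x
    have hmean := hv.integral_comp_add_smul_mul_radialKernel hbump x (-1)
    rw [eq_inv_mul_iff_mul_eq₀ integral_radialKernel_bumpProfile_pos.ne', mul_comm, ← hmean,
      convolution_def]
    simp only [neg_one_smul, ← sub_eq_add_neg, ContinuousLinearMap.mul_apply', mul_comm]
  rw [hconv]
  exact contDiff_const.mul <| hbump.hasCompactSupport_radialKernel.contDiff_convolution_left _
    hbump.contDiff_radialKernel hv.1.continuous.locallyIntegrable

protected lemma partialDeriv (hv : HarmonicFn v) (i : Fin n) : HarmonicFn (partialDeriv i v) := by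
  refine ⟨contDiff_partialDeriv i hv.contDiff (by norm_cast), fun x => ?_⟩
  rw [lapl_partialDeriv i (hv.contDiff.of_le (by norm_cast)), partialDeriv, funext hv.2]
  simp

end HarmonicFn

end MeanValue

section Liouville

open MvPolynomial

lemma exists_hasDerivAt_mul_eval_smul {σ : Type*} (Q : MvPolynomial σ ℝ) :
    ∃ S : MvPolynomial σ ℝ, ∀ (x : σ → ℝ) (t : ℝ),
      HasDerivAt (fun t : ℝ => t * eval (t • x) S) (eval (t • x) Q) t := by
  refine ⟨∑ k ∈ Finset.range (Q.totalDegree + 1),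
    C ((k + 1 : ℝ)⁻¹) * homogeneousComponent k Q, fun x t => ?_⟩
  have hterm (k : ℕ) : HasDerivAt
      (fun t : ℝ => t * ((k + 1 : ℝ)⁻¹ * (t ^ k * eval x (homogeneousComponent k Q))))
      (t ^ k * eval x (homogeneousComponent k Q)) t := by
    have hpow := (hasDerivAt_pow (k + 1) t).const_mul
      ((k + 1 : ℝ)⁻¹ * eval x (homogeneousComponent k Q))
    refine (hpow.congr_deriv ?_).congr_of_eventuallyEq (Eventually.of_forall fun t => ?_)
    · have hk : (k + 1 : ℝ) ≠ 0 := by positivity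
      rw [Nat.add_sub_cancel, Nat.cast_add_one]
      field_simp
    · ring
  rw [eval_smul_eq_sum_homogeneousComponent]
  simp only [map_sum, map_mul, eval_C, Finset.mul_sum,
    eval_smul_of_isHomogeneous (homogeneousComponent_isHomogeneous _ Q)]
  exact HasDerivAt.fun_sum fun k _ => hterm k

variable {n : ℕ} {v : EuclideanSpace ℝ (Fin n) → ℝ}

lemma exists_eq_polyFun_of_partialDeriv (hv : Differentiable ℝ v)
    (hpartial : ∀ i, ∃ Q, partialDeriv i v = polyFun Q) : ∃ S, v = polyFun S := by
  choose Q hQ using hpartial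
  choose S hS using fun i => exists_hasDerivAt_mul_eval_smul (Q i)
  refine ⟨C (v 0) + ∑ i, X i * S i, funext fun x => ?_⟩
  have hray (t : ℝ) : HasDerivAt (fun t : ℝ => v (t • x))
      (∑ i, x i * eval (t • fun i => x i) (Q i)) t := by
    have hcomp := (hv (t • x)).hasFDerivAt.comp_hasDerivAt t ((hasDerivAt_id t).smul_const x)
    simp only [fderiv_eq_sum_partialDeriv, one_smul, hQ] at hcomp
    exact hcomp
  have hprimitive (t : ℝ) : HasDerivAt
      (fun t : ℝ => ∑ i, x i * (t * eval (t • fun i => x i) (S i)))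
      (∑ i, x i * eval (t • fun i => x i) (Q i)) t :=
    HasDerivAt.fun_sum fun i _ => (hS i (fun i => x i) t).const_mul (x i)
  have hdiff (t : ℝ) := (hray t).sub (hprimitive t)
  have hconst := is_const_of_deriv_eq_zero (fun t => (hdiff t).differentiableAt)
    (fun t => by rw [(hdiff t).deriv, sub_self]) 1 0
  simp only [Pi.sub_apply, one_smul, zero_smul, one_mul, zero_mul, mul_zero,
    Finset.sum_const_zero, sub_zero] at hconst
  simp only [polyFun, map_add, map_sum, map_mul, eval_C, eval_X]
  linarith

namespace HarmonicFn

lemma partialDeriv_eq_integral (hv : HarmonicFn v) (i : Fin n) (x : EuclideanSpace ℝ (Fin n))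
    {R : ℝ} (hR : R ≠ 0) :
    partialDeriv i v x =
      -(2 * ∫ y, y i * v (x + R • y) * radialKernel (deriv bumpProfile) y) /
        (R * ∫ y : EuclideanSpace ℝ (Fin n), radialKernel bumpProfile y) := by
  have hv1 : ContDiff ℝ 1 v := hv.1.of_le one_le_two
  have hbump := isRadialProfile_bumpProfile
  have hmean := (hv.partialDeriv i).integral_comp_add_smul_mul_radialKernel hbump x R
  rw [hbump.integral_coord_mul_radialKernel_deriv (f := fun y => v (x + R • y))
    (hv1.comp (by fun_prop)) i]
  simp only [partialDeriv_comp_add_smul i (hv1.differentiable one_ne_zero), mul_assoc R]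
  rw [integral_const_mul, hmean, neg_neg, mul_left_comm, mul_div_cancel_right₀]
  exact mul_ne_zero hR integral_radialKernel_bumpProfile_pos.ne'

lemma exists_abs_partialDeriv_le (i : Fin n) : ∃ A : ℝ,
    ∀ {v : EuclideanSpace ℝ (Fin n) → ℝ}, HarmonicFn v → ∀ {x R B}, 0 < R →
      (∀ y ∈ closedBall x R, |v y| ≤ B) → |partialDeriv i v x| ≤ A * B / R := by
  set c := ∫ y : EuclideanSpace ℝ (Fin n), radialKernel bumpProfile y
  set A := ∫ y : EuclideanSpace ℝ (Fin n), |y i * radialKernel (deriv bumpProfile) y|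
  have hbump := isRadialProfile_bumpProfile.deriv
  have hc : 0 < c := integral_radialKernel_bumpProfile_pos
  refine ⟨2 * A / c, fun {v} hv x R B hR hB => ?_⟩
  have hintegral : |∫ y, y i * v (x + R • y) * radialKernel (deriv bumpProfile) y| ≤ A * B := by
    rw [← Real.norm_eq_abs, ← integral_mul_const]
    have hintegrable : Integrable fun y : EuclideanSpace ℝ (Fin n) =>
        |y i * radialKernel (deriv bumpProfile) y| * B :=
      (hbump.integrable_mul_radialKernel (by fun_prop)).abs.mul_const B
    refine norm_integral_le_of_norm_le hintegrable (Eventually.of_forall fun y => ?_)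
    rcases le_total 1 ‖y‖ with hy | hy
    · simp [hbump.radialKernel_eq_zero hy]
    · rw [mul_right_comm, norm_mul, Real.norm_eq_abs, Real.norm_eq_abs]
      refine mul_le_mul_of_nonneg_left (hB _ ?_) (abs_nonneg _)
      rw [mem_closedBall_iff_norm, add_sub_cancel_left, norm_smul, Real.norm_of_nonneg hR.le]
      exact mul_le_of_le_one_right hR.le hy
  rw [hv.partialDeriv_eq_integral i x hR.ne', abs_div, abs_neg, abs_mul,
    abs_of_pos (mul_pos hR hc), abs_two]
  calc _ ≤ 2 * (A * B) / (R * c) := by gcongr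
    _ = 2 * A / c * B / R := by field_simp

lemma partialDeriv_eq_zero_of_abs_le {B : ℝ} (hv : HarmonicFn v) (hB : ∀ x, |v x| ≤ B)
    (i : Fin n) : partialDeriv i v = 0 := by
  obtain ⟨A, hA⟩ := exists_abs_partialDeriv_le i
  funext x
  have hlim : Tendsto (fun R : ℝ => A * B / R) atTop (nhds 0) :=
    tendsto_const_nhds.div_atTop tendsto_id
  refine abs_nonpos_iff.1 (ge_of_tendsto hlim ?_)
  filter_upwards [eventually_gt_atTop 0] with R hR using hA hv hR fun y _ => hB y

lemma exists_abs_partialDeriv_le_pow {K : ℝ} {N : ℕ} (hv : HarmonicFn v)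
    (hK : ∀ x, |v x| ≤ K * (1 + ‖x‖) ^ (N + 1)) (i : Fin n) :
    ∃ L, ∀ x, |partialDeriv i v x| ≤ L * (1 + ‖x‖) ^ N := by
  obtain ⟨A, hA⟩ := exists_abs_partialDeriv_le i
  have hK0 : 0 ≤ K := by simpa using (abs_nonneg _).trans (hK 0)
  refine ⟨A * (K * 2 ^ (N + 1)), fun x => ?_⟩
  have hx : 0 < 1 + ‖x‖ := by positivity
  have hball (y) (hy : y ∈ closedBall x (1 + ‖x‖)) :
      |v y| ≤ K * (2 * (1 + ‖x‖)) ^ (N + 1) := by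
    refine (hK y).trans ?_
    gcongr
    linarith [norm_le_norm_add_const_of_dist_le (mem_closedBall.1 hy)]
  refine (hA hv hx hball).trans_eq ?_
  rw [mul_pow, pow_succ (1 + ‖x‖)]
  field_simp

/-- Differentiation lowers the growth exponent, so `v` is reached by integrating polynomials. -/
theorem exists_eq_polyFun_of_abs_le {N : ℕ} {K : ℝ} (hv : HarmonicFn v)
    (hK : ∀ x, |v x| ≤ K * (1 + ‖x‖) ^ N) : ∃ Q, v = polyFun Q := by
  induction N generalizing v K with
  | zero =>
    refine exists_eq_polyFun_of_partialDeriv (hv.1.differentiable two_ne_zero) fun i => ⟨0, ?_⟩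
    rw [hv.partialDeriv_eq_zero_of_abs_le (by simpa using hK) i]
    funext x
    simp [polyFun]
  | succ N ih =>
    refine exists_eq_polyFun_of_partialDeriv (hv.1.differentiable two_ne_zero) fun i => ?_
    obtain ⟨L, hL⟩ := hv.exists_abs_partialDeriv_le_pow hK i
    exact ih (hv.partialDeriv i) hL

end HarmonicFn

end Liouville

section Growth

lemma totalDegree_le_floor_of_abs_polyFun_le {n : ℕ} {R : MvPolynomial (Fin n) ℝ} {γ K : ℝ}
    (hγ : 0 ≤ γ) (hR : ∀ x, |polyFun R x| ≤ K * (1 + ‖x‖) ^ γ) : R.totalDegree ≤ ⌊γ⌋₊ := by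
  rcases eq_or_ne R 0 with rfl | hR0
  · simp
  refine Nat.le_floor ?_
  by_contra! hlt
  have hK : 0 ≤ K := by simpa using (abs_nonneg _).trans (hR 0)
  obtain ⟨x, hx⟩ :=
    (dense_setOf_eval_ne_zero (homogeneousComponent_totalDegree_ne_zero hR0)).nonempty
  set y : EuclideanSpace ℝ (Fin n) := WithLp.toLp 2 x
  have hzero : Tendsto (fun t : ℝ => K * (1 + ‖y‖) ^ γ * t ^ (-(R.totalDegree - γ))) atTop
      (nhds 0) := by
    simpa using (tendsto_rpow_neg_atTop (sub_pos.2 hlt)).const_mul (K * (1 + ‖y‖) ^ γ)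
  refine hx (abs_nonpos_iff.1 (le_of_tendsto_of_tendsto (tendsto_eval_smul_div_pow R x).abs
    hzero ?_))
  filter_upwards [eventually_ge_atTop 1] with t ht
  have ht0 : 0 < t := one_pos.trans_le ht
  have hnorm : 1 + ‖t • y‖ ≤ t * (1 + ‖y‖) := by
    rw [norm_smul, Real.norm_of_nonneg ht0.le, mul_one_add]
    gcongr
  rw [abs_div, abs_of_pos (pow_pos ht0 _), div_le_iff₀ (pow_pos ht0 _)]
  calc |MvPolynomial.eval (t • x) R| ≤ K * (1 + ‖t • y‖) ^ γ := hR (t • y)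
    _ ≤ K * (t * (1 + ‖y‖)) ^ γ := by gcongr
    _ = K * (1 + ‖y‖) ^ γ * (t ^ (-(R.totalDegree - γ)) * t ^ R.totalDegree) := by
      rw [Real.mul_rpow ht0.le (by positivity), ← Real.rpow_natCast t, ← Real.rpow_add ht0]
      ring_nf
    _ = K * (1 + ‖y‖) ^ γ * t ^ (-(R.totalDegree - γ)) * t ^ R.totalDegree := by ring

lemma mul_rpow_mul_abs_polyFun_le {n : ℕ} {K γ : ℝ} (hK : 0 ≤ K) (P : MvPolynomial (Fin n) ℝ)
    (x : EuclideanSpace ℝ (Fin n)) :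
    K * (1 + ‖x‖) ^ γ * |polyFun P x| ≤
      K * (∑ d ∈ P.support, |P.coeff d|) * (1 + ‖x‖) ^ (⌈γ⌉₊ + P.totalDegree) := by
  calc K * (1 + ‖x‖) ^ γ * |polyFun P x|
      ≤ K * (1 + ‖x‖) ^ (⌈γ⌉₊ : ℝ) *
          ((∑ d ∈ P.support, |P.coeff d|) * (1 + ‖x‖) ^ P.totalDegree) := by
        gcongr
        · simp
        · exact Nat.le_ceil γ
        · exact abs_polyFun_le P x
    _ = K * (∑ d ∈ P.support, |P.coeff d|) * (1 + ‖x‖) ^ (⌈γ⌉₊ + P.totalDegree) := by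
        rw [Real.rpow_natCast, pow_add]
        ring

end Growth

/-- **Liouville theorem for the ratio of harmonic functions sharing zero sets**
(Theorem 1.2). If `u` is a nonzero harmonic polynomial on ℝⁿ (`n ≥ 2`), `v` is entire
harmonic with `Z(u) ⊆ Z(v)`, and `|v/u|(x) ≤ C(1+|x|)^γ`, then `v/u` is a polynomial of
degree at most `⌊γ⌋`. -/
theorem liouville_ratio_harmonic (n : ℕ) (hn : 2 ≤ n)
    (P : MvPolynomial (Fin n) ℝ) (hP0 : P ≠ 0) (hP : IsHarmonicPoly P)
    (v : EuclideanSpace ℝ (Fin n) → ℝ) (hv : HarmonicFn v)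
    (hZ : ∀ x, polyFun P x = 0 → v x = 0)
    (γ C : ℝ) (hγ : 0 ≤ γ) (hC : 0 < C)
    (hgrowth : ∀ x, |v x| ≤ C * (1 + ‖x‖) ^ γ * |polyFun P x|) :
    ∃ R : MvPolynomial (Fin n) ℝ, R.totalDegree ≤ ⌊γ⌋₊ ∧
      ∀ x, v x = polyFun P x * polyFun R x := by
  obtain ⟨Q, rfl⟩ := hv.exists_eq_polyFun_of_abs_le fun x =>
    (hgrowth x).trans (mul_rpow_mul_abs_polyFun_le hC.le P x)
  set K : (Fin n → ℝ) → ℝ := fun x => C * (1 + ‖WithLp.toLp 2 x‖) ^ γ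
  have hK : Continuous K :=
    continuous_const.mul (Continuous.rpow_const (by fun_prop) fun _ => Or.inr hγ)
  obtain ⟨R, rfl⟩ : P ∣ Q := dvd_of_abs_eval_le hP0
    (fun _ hf hfP => hP.changesSign_of_irreducible_of_dvd hP0 hf hfP) hK
    fun x => hgrowth (WithLp.toLp 2 x)
  have hratio (x : Fin n → ℝ) : |MvPolynomial.eval x R| ≤ K x := by
    refine le_of_forall_eval_ne_zero hP0 (MvPolynomial.continuous_eval R).abs hK (fun x hx => ?_) x
    refine le_of_mul_le_mul_right ?_ (abs_pos.2 hx)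
    rw [← abs_mul, mul_comm, ← map_mul]
    exact hgrowth (WithLp.toLp 2 x)
  exact ⟨R, totalDegree_le_floor_of_abs_polyFun_le hγ fun x => hratio x,
    fun x => map_mul _ P R⟩
end

section
/- Let Q ∈ ℝ[x₁,…,x_n] be a harmonic polynomial and let P ∈ ℝ[x₁,…,x_n] be any polynomial such that every real zero of Q is a zero of P, i.e. {x ∈ ℝⁿ : Q(x) = 0} ⊆ {x ∈ ℝⁿ : P(x) = 0}. Then there exists a polynomial R ∈ ℝ[x₁,…,x_n] such that P = Q·R. -/
open MeasureTheory Metric Filter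

/-!
The Laplacian lowers the degree of homogeneous components by exactly two, so the leading form of a
harmonic polynomial is harmonic. The key point (Brelot–Choquet) is that a nonzero polynomial `Q`
with harmonic leading form has no non-constant factor `f ≥ 0`: if `Q = f * g`, with leading forms
`F ≥ 0` and `G` of `f` and `g`, then `F * G` is homogeneous harmonic of degree `> deg G`. By Euler's
identity and Gaussian integration by parts it is orthogonal to `G` for the Gaussian measure, so
`∫ F G² = 0` although `F G² ≥ 0` is not zero.

Consequently `Q` is squarefree and each of its irreducible factors `f` takes both signs. Such an
`f` divides every polynomial `P` vanishing on its zeros. Otherwise, restricting to lines of a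
direction `v` joining a point where `f < 0` to one where `f > 0`, Gauss's lemma gives `c ≠ 0` with
`f(y + t v) a(y, t) + P(y + t v) b(y, t) = c(y)`; but for `y` near the first point the intermediate
value theorem yields a `t` with `f(y + t v) = 0`, so `c` vanishes on an open set.
-/

namespace Murdoch

open MvPolynomial ProbabilityTheory
open scoped Topology NNReal

section Divisibility

lemma dvd_of_squarefree_of_forall_prime_dvd {M : Type*} [CommMonoidWithZero M] [Nontrivial M]
    [UniqueFactorizationMonoid M] {a b : M} (ha : Squarefree a)
    (h : ∀ p, Prime p → p ∣ a → p ∣ b) : a ∣ b := by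
  induction a using UniqueFactorizationMonoid.induction_on_prime with
  | h₁ => exact absurd ha not_squarefree_zero
  | h₂ u hu => exact hu.dvd
  | h₃ a p _ hp ih =>
    obtain ⟨hpa, -, ha'⟩ := squarefree_mul_iff.mp ha
    exact hpa.mul_dvd (h p hp (dvd_mul_right p a))
      (ih ha' fun q hq hqa => h q hq (hqa.mul_left p))

lemma exists_mul_add_mul_eq_C_of_not_dvd {R : Type*} [CommRing R] [IsDomain R]
    [UniqueFactorizationMonoid R] {f g : Polynomial R} (hf : Irreducible f)
    (hdeg : f.natDegree ≠ 0) (hfg : ¬ f ∣ g) :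
    ∃ a b : Polynomial R, ∃ c ≠ 0, f * a + g * b = Polynomial.C c := by
  let K := FractionRing R
  let φ := algebraMap R K
  have : NormalizedGCDMonoid R := Classical.choice inferInstance
  have hprim : f.IsPrimitive := hf.isPrimitive hdeg
  have hirr : Irreducible (f.map φ) := hprim.irreducible_iff_irreducible_map_fraction_map.mp hf
  have hcop : IsCoprime (f.map φ) (g.map φ) :=
    hirr.coprime_iff_not_dvd.mpr fun h => hfg (hprim.dvd_of_fraction_map_dvd_fraction_map h)
  have hres : f.resultant g ≠ 0 := by
    have h := Polynomial.resultant_ne_zero _ _ hcop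
    have hφ : Function.Injective φ := IsFractionRing.injective R K
    rw [Polynomial.natDegree_map_eq_of_injective hφ, Polynomial.natDegree_map_eq_of_injective hφ,
      Polynomial.resultant_map_map] at h
    exact ne_zero_of_map h
  obtain ⟨a, b, -, -, hab⟩ :=
    Polynomial.exists_mul_add_mul_eq_C_resultant f g le_rfl le_rfl (Or.inl hdeg)
  exact ⟨a, b, _, hres, hab⟩

end Divisibility

section LineShift

variable {σ R : Type*} [CommSemiring R]

/-- The polynomial `f(x + t v)` in the variable `t`, with coefficients in the polynomials in `x`. -/
noncomputable def lineShift (v : σ → R) :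
    MvPolynomial σ R →ₐ[R] Polynomial (MvPolynomial σ R) :=
  aeval fun i => Polynomial.C (X i) + Polynomial.C (C (v i)) * Polynomial.X

lemma lineShift_X (v : σ → R) (i : σ) :
    lineShift v (X i) = Polynomial.C (X i) + Polynomial.C (C (v i)) * Polynomial.X :=
  aeval_X _ i

lemma eval_map_eval_lineShift (v y : σ → R) (t : R) (f : MvPolynomial σ R) :
    ((lineShift v f).map (eval y)).eval t = eval (y + t • v) f := by
  induction f using MvPolynomial.induction_on with
  | C a => simp [Polynomial.algebraMap_apply]
  | add p q hp hq => simp only [map_add, Polynomial.map_add, Polynomial.eval_add, hp, hq]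
  | mul_X p i hp =>
    rw [map_mul, Polynomial.map_mul, Polynomial.eval_mul, hp, map_mul]
    simp [lineShift_X, mul_comm t]

lemma eval_zero_lineShift (v : σ → R) (f : MvPolynomial σ R) :
    (lineShift v f).eval 0 = f := by
  induction f using MvPolynomial.induction_on with
  | C a => simp [Polynomial.algebraMap_apply]
  | add p q hp hq => simp only [map_add, Polynomial.eval_add, hp, hq]
  | mul_X p i hp =>
    rw [map_mul, Polynomial.eval_mul, hp]
    simp [lineShift_X]

lemma dvd_of_lineShift_dvd {v : σ → R} {f g : MvPolynomial σ R}
    (h : lineShift v f ∣ lineShift v g) : f ∣ g := by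
  simpa only [eval_zero_lineShift] using Polynomial.eval_dvd (x := 0) h

/-- The substitution `x ↦ x + t v` on polynomials in `x` and `t`. -/
noncomputable def shear (v : σ → R) :
    Polynomial (MvPolynomial σ R) →+* Polynomial (MvPolynomial σ R) :=
  Polynomial.eval₂RingHom (lineShift v).toRingHom Polynomial.X

lemma shear_C (v : σ → R) (f : MvPolynomial σ R) : shear v (Polynomial.C f) = lineShift v f :=
  Polynomial.eval₂_C _ _

lemma shear_X (v : σ → R) : shear v Polynomial.X = Polynomial.X :=
  Polynomial.eval₂_X _ _

lemma shear_neg_comp_shear {R : Type*} [CommRing R] (v : σ → R) :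
    (shear (-v)).comp (shear v) = RingHom.id _ := by
  refine Polynomial.ringHom_ext' (MvPolynomial.ringHom_ext (fun r => ?_) fun i => ?_) ?_
  · simp [shear_C]
  · simp only [RingHom.comp_apply, shear_C, lineShift_X, map_add, map_mul, algHom_C, shear_X,
      Polynomial.algebraMap_apply, algebraMap_eq, Pi.neg_apply, map_neg, RingHom.id_apply]
    ring
  · simp [shear_X]

lemma prime_lineShift {R : Type*} [CommRing R] {f : MvPolynomial σ R} (hf : Prime f)
    (v : σ → R) : Prime (lineShift v f) := by
  let e : Polynomial (MvPolynomial σ R) ≃+* Polynomial (MvPolynomial σ R) :=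
    .ofRingHom (shear v) (shear (-v)) (by simpa using shear_neg_comp_shear (-v))
      (shear_neg_comp_shear v)
  rw [← shear_C]
  exact (MulEquiv.prime_iff e).mpr (Polynomial.prime_C_iff.mpr hf)

end LineShift

section SignChange

variable {σ : Type*}

lemma eq_zero_of_eventually_eval_eq_zero {𝕜 : Type*} [Field 𝕜] [TopologicalSpace 𝕜] [T1Space 𝕜]
    [∀ x : 𝕜, NeBot (𝓝[≠] x)] {p : MvPolynomial σ 𝕜} {x : σ → 𝕜}
    (h : ∀ᶠ y in 𝓝 x, eval y p = 0) : p = 0 := by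
  rw [Filter.Eventually, nhds_pi, Filter.mem_pi] at h
  obtain ⟨I, -, s, hs, hsub⟩ := h
  refine MvPolynomial.funext_set s (fun i => infinite_of_mem_nhds (x i) (hs i)) fun y hy => ?_
  rw [map_zero]
  exact hsub fun i _ => hy i (Set.mem_univ i)

lemma eventually_exists_eval_add_smul_eq_zero {f : MvPolynomial σ ℝ} {p v : σ → ℝ}
    (hp : eval p f < 0) (hq : 0 < eval (p + v) f) :
    ∀ᶠ y in 𝓝 p, ∃ t : ℝ, eval (y + t • v) f = 0 := by
  have hf : Continuous fun y => eval y f := MvPolynomial.continuous_eval f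
  have hneg : ∀ᶠ y in 𝓝 p, eval y f < 0 := hf.continuousAt.eventually_lt_const hp
  have hpos : ∀ᶠ y in 𝓝 p, 0 < eval (y + v) f :=
    (hf.comp (continuous_add_const v)).continuousAt.eventually_const_lt hq
  filter_upwards [hneg, hpos] with y hy₀ hy₁
  have hline : Continuous fun t : ℝ => eval (y + t • v) f := hf.comp (by fun_prop)
  exact mem_range_of_exists_le_of_exists_ge hline ⟨0, by simpa using hy₀.le⟩
    ⟨1, by simpa using hy₁.le⟩

lemma dvd_of_irreducible_of_eval_neg_of_eval_pos {f P : MvPolynomial σ ℝ} (hf : Irreducible f)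
    {p q : σ → ℝ} (hp : eval p f < 0) (hq : 0 < eval q f)
    (hZ : ∀ x, eval x f = 0 → eval x P = 0) : f ∣ P := by
  by_contra hnd
  obtain ⟨v, rfl⟩ : ∃ v, q = p + v := ⟨q - p, (add_sub_cancel p q).symm⟩
  have hdeg : (lineShift v f).natDegree ≠ 0 := by
    intro h
    obtain ⟨c, hc⟩ := Polynomial.natDegree_eq_zero.mp h
    have hconst (t : ℝ) : eval (p + t • v) f = eval p c := by
      rw [← eval_map_eval_lineShift, ← hc, Polynomial.map_C, Polynomial.eval_C]
    have h₀ := hconst 0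
    have h₁ := hconst 1
    rw [zero_smul, add_zero] at h₀
    rw [one_smul] at h₁
    linarith
  obtain ⟨a, b, c, hc, hab⟩ := exists_mul_add_mul_eq_C_of_not_dvd
    (prime_lineShift hf.prime v).irreducible hdeg (mt dvd_of_lineShift_dvd hnd)
  refine hc (eq_zero_of_eventually_eval_eq_zero (x := p) ?_)
  filter_upwards [eventually_exists_eval_add_smul_eq_zero hp hq] with y ⟨t, ht⟩
  have h := congrArg (fun F => (F.map (eval y)).eval t) hab
  simpa [eval_map_eval_lineShift, ht, hZ _ ht] using h.symm

end SignChange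

section LeadingForm

variable {σ R : Type*} [CommSemiring R]

/-- The homogeneous part of highest degree of a polynomial. -/
noncomputable def leadingForm (p : MvPolynomial σ R) : MvPolynomial σ R :=
  homogeneousComponent p.totalDegree p

lemma leadingForm_isHomogeneous (p : MvPolynomial σ R) :
    (leadingForm p).IsHomogeneous p.totalDegree :=
  homogeneousComponent_isHomogeneous _ _

lemma leadingForm_ne_zero {p : MvPolynomial σ R} (hp : p ≠ 0) : leadingForm p ≠ 0 := by
  obtain ⟨d, hd, hdeg⟩ : ∃ d ∈ p.support, p.totalDegree = d.degree :=
    Finset.exists_mem_eq_sup _ (support_nonempty.mpr hp) _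
  refine ne_zero_iff.mpr ⟨d, ?_⟩
  rw [leadingForm, coeff_homogeneousComponent, if_pos hdeg.symm]
  exact mem_support_iff.mp hd

lemma leadingForm_mul [NoZeroDivisors R] {p q : MvPolynomial σ R} (hp : p ≠ 0) (hq : q ≠ 0) :
    leadingForm (p * q) = leadingForm p * leadingForm q := by
  rw [leadingForm, totalDegree_mul_of_isDomain hp hq]
  have hcomp (N i j : ℕ) : homogeneousComponent N
      (homogeneousComponent i p * homogeneousComponent j q) =
        if N = i + j then homogeneousComponent i p * homogeneousComponent j q else 0 :=
    homogeneousComponent_of_mem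
      ((homogeneousComponent_isHomogeneous i p).mul (homogeneousComponent_isHomogeneous j q))
  have hsum : p * q =
      ∑ i ∈ Finset.range (p.totalDegree + 1), ∑ j ∈ Finset.range (q.totalDegree + 1),
        homogeneousComponent i p * homogeneousComponent j q := by
    rw [← Finset.sum_mul_sum, sum_homogeneousComponent, sum_homogeneousComponent]
  rw [hsum]
  simp only [map_sum, hcomp]
  rw [Finset.sum_eq_single p.totalDegree, Finset.sum_eq_single q.totalDegree, if_pos rfl,
    leadingForm, leadingForm]
  · exact fun j _ hj => if_neg (by omega)
  · grind
  · exact fun i hi hip => Finset.sum_eq_zero fun j hj => if_neg (by grind)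
  · grind

lemma eval_smul_of_isHomogeneous {p : MvPolynomial σ R} {k : ℕ} (hp : p.IsHomogeneous k) (t : R)
    (x : σ → R) : eval (t • x) p = t ^ k * eval x p := by
  rw [eval_eq, eval_eq, Finset.mul_sum]
  refine Finset.sum_congr rfl fun d hd => ?_
  simp only [Pi.smul_apply, smul_eq_mul, mul_pow, Finset.prod_mul_distrib,
    Finset.prod_pow_eq_pow_sum]
  rw [hp.degree_eq_sum_deg_support hd, mul_left_comm]

lemma eval_smul_eq_sum (p : MvPolynomial σ R) (t : R) (x : σ → R) :
    eval (t • x) p =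
      ∑ i ∈ Finset.range (p.totalDegree + 1), t ^ i * eval x (homogeneousComponent i p) := by
  conv_lhs => rw [← sum_homogeneousComponent p]
  simp only [map_sum, eval_smul_of_isHomogeneous (homogeneousComponent_isHomogeneous _ p)]

lemma tendsto_eval_smul_div_pow (p : MvPolynomial σ ℝ) (x : σ → ℝ) :
    Tendsto (fun t : ℝ => eval (t • x) p / t ^ p.totalDegree) atTop
      (𝓝 (eval x (leadingForm p))) := by
  simp only [eval_smul_eq_sum, Finset.sum_range_succ, add_div, Finset.sum_div]
  have hlower : Tendsto (fun t : ℝ => ∑ i ∈ Finset.range p.totalDegree,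
      t ^ i * eval x (homogeneousComponent i p) / t ^ p.totalDegree) atTop (𝓝 0) := by
    rw [← Finset.sum_const_zero (s := Finset.range p.totalDegree)]
    refine tendsto_finsetSum _ fun i hi => ?_
    simpa only [mul_div_right_comm, zero_mul] using
      (tendsto_pow_div_pow_atTop_zero (𝕜 := ℝ) (Finset.mem_range.mp hi)).mul_const _
  have htop : (fun t : ℝ => t ^ p.totalDegree * eval x (leadingForm p) / t ^ p.totalDegree)
      =ᶠ[atTop] fun _ => eval x (leadingForm p) := by
    filter_upwards [eventually_gt_atTop 0] with t ht
    exact mul_div_cancel_left₀ _ (pow_pos ht _).ne'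
  simpa only [zero_add, leadingForm] using hlower.add (tendsto_const_nhds.congr' htop.symm)

lemma eval_leadingForm_nonneg {p : MvPolynomial σ ℝ} (hp : ∀ x, 0 ≤ eval x p) (x : σ → ℝ) :
    0 ≤ eval x (leadingForm p) :=
  ge_of_tendsto (tendsto_eval_smul_div_pow p x) <| (eventually_ge_atTop 0).mono fun _ ht =>
    div_nonneg (hp _) (pow_nonneg ht _)

end LeadingForm

section Laplacian

variable {σ R : Type*} [CommSemiring R]

lemma pderiv_pderiv_comm (i j : σ) (p : MvPolynomial σ R) :
    pderiv i (pderiv j p) = pderiv j (pderiv i p) := by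
  classical
  obtain rfl | hij := eq_or_ne i j
  · rfl
  ext d
  simp [coeff_pderiv, add_right_comm d, hij, hij.symm, mul_right_comm]

lemma pderiv_homogeneousComponent_succ (i : σ) (m : ℕ) (p : MvPolynomial σ R) :
    pderiv i (homogeneousComponent (m + 1) p) = homogeneousComponent m (pderiv i p) := by
  ext d
  simp [coeff_pderiv, coeff_homogeneousComponent]

variable [Fintype σ]

/-- The Laplacian `∑ i, ∂²/∂xᵢ²` on polynomials. -/
noncomputable def laplacian : MvPolynomial σ R →ₗ[R] MvPolynomial σ R :=
  ∑ i, (pderiv i).toLinearMap ∘ₗ (pderiv i).toLinearMap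

lemma laplacian_apply (p : MvPolynomial σ R) : laplacian p = ∑ i, pderiv i (pderiv i p) := by
  simp [laplacian]

lemma laplacian_pderiv (i : σ) (p : MvPolynomial σ R) :
    laplacian (pderiv i p) = pderiv i (laplacian p) := by
  simp only [laplacian_apply, map_sum, pderiv_pderiv_comm _ i]

lemma laplacian_homogeneousComponent_eq_zero {p : MvPolynomial σ R} (hp : laplacian p = 0)
    (m : ℕ) : laplacian (homogeneousComponent m p) = 0 := by
  rw [laplacian_apply] at hp ⊢
  match m with
  | 0 => simp
  | 1 => simp [pderiv_homogeneousComponent_succ]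
  | m + 2 => simp only [pderiv_homogeneousComponent_succ, ← map_sum, hp, map_zero]

section SteinFunctional

variable {M : Type*} [AddCommMonoid M] [Module R M] {E : MvPolynomial σ R →ₗ[R] M}
  (hE : ∀ i p, E (X i * p) = E (pderiv i p))

include hE

lemma nsmul_map_mul_eq_sum_of_laplacian_eq_zero {m : ℕ} {H : MvPolynomial σ R}
    (hH : H.IsHomogeneous m) (hΔ : laplacian H = 0) (g : MvPolynomial σ R) :
    m • E (H * g) = ∑ i, E (pderiv i H * pderiv i g) := by
  have hparts (i : σ) :
      E (X i * pderiv i H * g) = E (pderiv i (pderiv i H) * g) + E (pderiv i H * pderiv i g) := by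
    rw [mul_assoc, hE, pderiv_mul, map_add]
  calc m • E (H * g) = E ((∑ i, X i * pderiv i H) * g) := by
        rw [hH.sum_X_mul_pderiv, smul_mul_assoc, map_nsmul]
    _ = E (laplacian H * g) + ∑ i, E (pderiv i H * pderiv i g) := by
        simp only [laplacian_apply, Finset.sum_mul, map_sum, hparts, Finset.sum_add_distrib]
    _ = ∑ i, E (pderiv i H * pderiv i g) := by rw [hΔ, zero_mul, map_zero, zero_add]

lemma map_mul_eq_zero_of_laplacian_eq_zero [IsAddTorsionFree M] {k m : ℕ}
    {H g : MvPolynomial σ R} (hH : H.IsHomogeneous m) (hΔ : laplacian H = 0)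
    (hg : g.IsHomogeneous k) (hkm : k < m) : E (H * g) = 0 := by
  have hm : m ≠ 0 := by omega
  rw [← nsmul_right_inj hm, nsmul_map_mul_eq_sum_of_laplacian_eq_zero hE hH hΔ, nsmul_zero]
  refine Finset.sum_eq_zero fun i _ => ?_
  match k with
  | 0 =>
    rw [totalDegree_eq_zero_iff_eq_C.mp (Nat.le_zero.mp hg.totalDegree_le), pderiv_C, mul_zero,
      map_zero]
  | k + 1 =>
    exact map_mul_eq_zero_of_laplacian_eq_zero hH.pderiv
      (by rw [laplacian_pderiv, hΔ, map_zero]) hg.pderiv (by omega)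

end SteinFunctional

end Laplacian

section Gaussian

lemma hasDerivAt_gaussianPDFReal (μ : ℝ) (v : ℝ≥0) (x : ℝ) :
    HasDerivAt (gaussianPDFReal μ v) (-((x - μ) / v * gaussianPDFReal μ v x)) x := by
  have hexponent : HasDerivAt (fun x : ℝ => -(x - μ) ^ 2 / (2 * v)) (-((x - μ) / v)) x :=
    ((((hasDerivAt_id' x).sub_const μ).pow 2).neg.div_const (2 * (v : ℝ))).congr_deriv (by
      simp only [Nat.cast_ofNat, Nat.add_one_sub_one, pow_one, mul_one]; field)
  exact (hexponent.exp.const_mul (√(2 * Real.pi * v))⁻¹).congr_deriv (by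
    rw [gaussianPDFReal]; ring)

lemma integrable_gaussianReal_iff {μ : ℝ} {v : ℝ≥0} (hv : v ≠ 0) {f : ℝ → ℝ} :
    Integrable f (gaussianReal μ v) ↔ Integrable fun x => f x * gaussianPDFReal μ v x := by
  rw [gaussianReal_of_var_ne_zero _ hv, integrable_withDensity_iff
    (measurable_gaussianPDF μ v) (ae_of_all _ fun _ => gaussianPDF_lt_top)]
  simp only [toReal_gaussianPDF]

lemma integral_sub_mul_gaussianReal {μ : ℝ} {v : ℝ≥0} {f f' : ℝ → ℝ}
    (hf : ∀ x, HasDerivAt f (f' x) x) (hint : Integrable f (gaussianReal μ v))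
    (hint' : Integrable f' (gaussianReal μ v))
    (hmul : Integrable (fun x => (x - μ) * f x) (gaussianReal μ v)) :
    ∫ x, (x - μ) * f x ∂gaussianReal μ v = v * ∫ x, f' x ∂gaussianReal μ v := by
  obtain rfl | hv := eq_or_ne v 0
  · simp [gaussianReal_zero_var]
  have hv' : (v : ℝ) ≠ 0 := NNReal.coe_ne_zero.mpr hv
  rw [integrable_gaussianReal_iff hv] at hint hint' hmul
  have hparts := integral_mul_deriv_eq_deriv_mul_of_integrable (fun x _ => hf x)
    (fun x _ => hasDerivAt_gaussianPDFReal μ v x)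
    ((hmul.div_const v).neg.congr (ae_of_all _ fun x => by
      simp only [Pi.neg_apply, Pi.mul_apply]; ring)) hint' hint
  rw [integral_gaussianReal_eq_integral_smul hv, integral_gaussianReal_eq_integral_smul hv]
  calc ∫ x, gaussianPDFReal μ v x • ((x - μ) * f x)
      = -(v * ∫ x, f x * -((x - μ) / v * gaussianPDFReal μ v x)) := by
        rw [← integral_const_mul, ← integral_neg]
        congr with x
        simp only [smul_eq_mul]
        field
    _ = v * ∫ x, gaussianPDFReal μ v x • f' x := by
        rw [hparts]
        simp only [smul_eq_mul, mul_comm, mul_neg, neg_neg]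

lemma integrable_pow_gaussianReal (μ : ℝ) (v : ℝ≥0) (k : ℕ) :
    Integrable (fun x : ℝ => x ^ k) (gaussianReal μ v) := by
  rw [← integrable_norm_iff (by fun_prop)]
  have hmem : MemLp id k (gaussianReal μ v) := memLp_id_gaussianReal' k (by simp)
  simpa using hmem.integrable_norm_pow'

lemma moment_succ_gaussianReal (k : ℕ) :
    moment id (k + 1) (gaussianReal 0 1) = k * moment id (k - 1) (gaussianReal 0 1) := by
  have hint := integrable_pow_gaussianReal 0 1
  have h := integral_sub_mul_gaussianReal (hasDerivAt_pow k) (hint k)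
    ((hint (k - 1)).const_mul (k : ℝ)) (by simpa [pow_succ'] using hint (k + 1))
  simpa [moment_def, pow_succ', integral_const_mul] using h

variable {σ : Type*} [Fintype σ]

lemma integrable_eval_pi {μ : σ → Measure ℝ} [∀ i, SigmaFinite (μ i)]
    (hμ : ∀ i (k : ℕ), Integrable (fun x => x ^ k) (μ i)) (p : MvPolynomial σ ℝ) :
    Integrable (fun x => eval x p) (Measure.pi μ) := by
  induction p using MvPolynomial.induction_on' with
  | monomial s c =>
    simp only [eval_monomial, Finsupp.prod_fintype _ _ fun _ => pow_zero _]
    exact (Integrable.fintype_prod_dep fun i => hμ i (s i)).const_mul c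
  | add p q hp hq =>
    simp only [map_add]
    exact hp.add hq

lemma integral_eval_monomial_pi (μ : σ → Measure ℝ) [∀ i, SigmaFinite (μ i)] (s : σ →₀ ℕ)
    (c : ℝ) : ∫ x, eval x (monomial s c) ∂Measure.pi μ = c * ∏ i, moment id (s i) (μ i) := by
  simp only [eval_monomial, Finsupp.prod_fintype _ _ fun _ => pow_zero _, integral_const_mul]
  rw [integral_fintype_prod_eq_prod fun i (y : ℝ) => y ^ s i]
  rfl

/-- The expectation of a polynomial in independent standard Gaussian variables. -/
noncomputable def gaussianExpectation : MvPolynomial σ ℝ →ₗ[ℝ] ℝ where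
  toFun p := ∫ x, eval x p ∂Measure.pi fun _ => gaussianReal 0 1
  map_add' p q := by
    simp only [map_add]
    exact integral_add (integrable_eval_pi (fun _ => integrable_pow_gaussianReal 0 1) p)
      (integrable_eval_pi (fun _ => integrable_pow_gaussianReal 0 1) q)
  map_smul' c p := by simp [integral_const_mul]

lemma gaussianExpectation_X_mul (i : σ) (p : MvPolynomial σ ℝ) :
    gaussianExpectation (X i * p) = gaussianExpectation (pderiv i p) := by
  classical
  induction p using MvPolynomial.induction_on' with
  | monomial s c =>
    have hmonomial (s : σ →₀ ℕ) (c : ℝ) : gaussianExpectation (monomial s c) =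
        c * (moment id (s i) (gaussianReal 0 1) *
          ∏ j ∈ Finset.univ.erase i, moment id (s j) (gaussianReal 0 1)) := by
      rw [Finset.mul_prod_erase _ (fun j => moment id (s j) (gaussianReal 0 1)) (Finset.mem_univ i)]
      exact integral_eval_monomial_pi _ s c
    have hoff (s' : σ →₀ ℕ) (hs' : ∀ j ≠ i, s' j = s j) :
        ∏ j ∈ Finset.univ.erase i, moment id (s' j) (gaussianReal 0 1) =
          ∏ j ∈ Finset.univ.erase i, moment id (s j) (gaussianReal 0 1) :=
      Finset.prod_congr rfl fun j hj => by rw [hs' j (Finset.ne_of_mem_erase hj)]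
    rw [pderiv_monomial, X, monomial_mul, hmonomial, hmonomial,
      hoff (Finsupp.single i 1 + s) fun j hj => by simp [hj.symm],
      hoff (s - Finsupp.single i 1) fun j hj => by simp [hj.symm], Finsupp.add_apply,
      Finsupp.tsub_apply, Finsupp.single_eq_same, add_comm 1, moment_succ_gaussianReal]
    ring
  | add p q hp hq => simp only [mul_add, map_add, hp, hq]

lemma eq_zero_of_gaussianExpectation_eq_zero {p : MvPolynomial σ ℝ} (hp : ∀ x, 0 ≤ eval x p)
    (h : gaussianExpectation p = 0) : p = 0 := by
  have hpos : (gaussianReal 0 1).IsOpenPosMeasure :=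
    (gaussianReal_absolutelyContinuous' 0 one_ne_zero).isOpenPosMeasure
  have hae : (fun x => eval x p) =ᵐ[Measure.pi fun _ => gaussianReal 0 1] fun _ => 0 :=
    (integral_eq_zero_iff_of_nonneg hp
      (integrable_eval_pi (fun _ => integrable_pow_gaussianReal 0 1) p)).mp h
  have heq := ((MvPolynomial.continuous_eval p).ae_eq_iff_eq _ continuous_const).mp hae
  exact MvPolynomial.funext fun x => by simpa using congrFun heq x

end Gaussian

section BrelotChoquet

variable {σ : Type*} [Fintype σ] {Q f : MvPolynomial σ ℝ}

lemma isUnit_of_dvd_of_eval_nonneg (hQ : laplacian (leadingForm Q) = 0) (hQ₀ : Q ≠ 0)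
    (hfQ : f ∣ Q) (hf : ∀ x, 0 ≤ eval x f) : IsUnit f := by
  obtain ⟨g, rfl⟩ := hfQ
  obtain ⟨hf₀, hg₀⟩ := mul_ne_zero_iff.mp hQ₀
  by_contra hunit
  have hdeg : 0 < f.totalDegree := by
    refine Nat.pos_of_ne_zero fun h => hunit ?_
    rw [totalDegree_eq_zero_iff_eq_C.mp h] at hf₀ ⊢
    exact (IsUnit.mk0 _ fun h₀ => hf₀ (by rw [h₀, C_0])).map C
  have hnonneg (x : σ → ℝ) : 0 ≤ eval x (leadingForm (f * g) * leadingForm g) := by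
    rw [leadingForm_mul hf₀ hg₀, mul_assoc, map_mul, map_mul]
    exact mul_nonneg (eval_leadingForm_nonneg hf x) (mul_self_nonneg _)
  have horth : gaussianExpectation (leadingForm (f * g) * leadingForm g) = 0 :=
    map_mul_eq_zero_of_laplacian_eq_zero gaussianExpectation_X_mul
      (leadingForm_isHomogeneous _) hQ (leadingForm_isHomogeneous g)
      (by rw [totalDegree_mul_of_isDomain hf₀ hg₀]; omega)
  exact mul_ne_zero (leadingForm_ne_zero hQ₀) (leadingForm_ne_zero hg₀)
    (eq_zero_of_gaussianExpectation_eq_zero hnonneg horth)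

lemma exists_eval_neg_of_dvd (hQ : laplacian (leadingForm Q) = 0) (hQ₀ : Q ≠ 0) (hfQ : f ∣ Q)
    (hf : ¬ IsUnit f) : ∃ x, eval x f < 0 := by
  contrapose! hf
  exact isUnit_of_dvd_of_eval_nonneg hQ hQ₀ hfQ hf

lemma squarefree_of_laplacian_leadingForm_eq_zero (hQ : laplacian (leadingForm Q) = 0)
    (hQ₀ : Q ≠ 0) : Squarefree Q := fun f hf =>
  isUnit_of_mul_isUnit_left <| isUnit_of_dvd_of_eval_nonneg hQ hQ₀ hf fun x => by
    rw [map_mul]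
    exact mul_self_nonneg _

end BrelotChoquet

end Murdoch

open Murdoch in
theorem murdoch_division_lemma_general {σ : Type*} [Fintype σ] {Q P : MvPolynomial σ ℝ}
    (hQ : laplacian (leadingForm Q) = 0)
    (hZ : {x : σ → ℝ | MvPolynomial.eval x Q = 0} ⊆ {x : σ → ℝ | MvPolynomial.eval x P = 0}) :
    Q ∣ P := by
  obtain rfl | hQ₀ := eq_or_ne Q 0
  · rw [zero_dvd_iff]
    exact MvPolynomial.funext fun x => by simpa using @hZ x
  refine dvd_of_squarefree_of_forall_prime_dvd
    (squarefree_of_laplacian_leadingForm_eq_zero hQ hQ₀) fun f hf hfQ => ?_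
  obtain ⟨p, hp⟩ := exists_eval_neg_of_dvd hQ hQ₀ hfQ hf.not_isUnit
  obtain ⟨q, hq⟩ := exists_eval_neg_of_dvd hQ hQ₀ (neg_dvd.mpr hfQ) hf.neg.not_isUnit
  refine dvd_of_irreducible_of_eval_neg_of_eval_pos hf.irreducible hp (by simpa using hq) ?_
  intro x hx
  obtain ⟨g, rfl⟩ := hfQ
  exact hZ (by simp [hx])

/-- **Murdoch's division lemma** (Lemma 5.4). If `Q` is a harmonic polynomial and every
real zero of `Q` is a zero of `P`, then `Q` divides `P`. -/
theorem murdoch_division_lemma (n : ℕ) (Q P : MvPolynomial (Fin n) ℝ)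
    (hQ : IsHarmonicPoly Q)
    (hZ : {x : Fin n → ℝ | MvPolynomial.eval x Q = 0} ⊆
      {x : Fin n → ℝ | MvPolynomial.eval x P = 0}) :
    ∃ R : MvPolynomial (Fin n) ℝ, P = Q * R :=
  murdoch_division_lemma_general
    (Murdoch.laplacian_homogeneousComponent_eq_zero ((Murdoch.laplacian_apply Q).trans hQ) _) hZ
end

section
/- Let u be an entire harmonic function on ℝ² such that the set {x ∈ ℝ² : u(x) ≠ 0} has at most k connected components (k ≥ 1). Then u is a polynomial function of degree at most k − 1. -/
open MeasureTheory Metric Filter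

/-- The set of connected components of a subset `S` of a topological space. -/
def nodalComponents {X : Type*} [TopologicalSpace X] (S : Set X) : Set (Set X) :=
  {C | ∃ x ∈ S, connectedComponentIn S x = C}

/-!
Write `u = re f` with `f` entire, and let `re w = 0`. Suppose first that the level line `re f = 0`
is regular. Each preimage `q` of `w` lies on a component of this line which `f` maps injectively,
hence on a different one for each `q`. Since the plane is simply connected, there is an
integer-valued function, constant on nodal regions, which jumps by one across the component of `q`
and does not jump elsewhere on the line. Together with the constants these functions are linearly
independent, so `w` has fewer preimages than there are nodal regions. Critical level lines are
handled by perturbing the level and the value.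

Let now `w` be a value on the line `re w = 0` with as many preimages as possible. The preimages of
nearby values on the line then stay in a compact set, so `f` omits a segment near infinity. A Möbius
map followed by a square root makes `f` bounded there; hence `f` has at most a pole at infinity and
is a polynomial. Its degree is the number of preimages of a regular value.
-/

open Topology Set

/-! ### Splitting integer-valued functions -/

section
variable {X : Type*} [TopologicalSpace X]

theorem continuousOn_mul_of_tsupport_subset {R : Type*} [TopologicalSpace R] [MulZeroClass R]
    [ContinuousMul R] {U V : Set X} (hV : IsOpen V) {ρ g : X → R}
    (hρ : Continuous ρ) (hsupp : tsupport ρ ⊆ V) (hg : ContinuousOn g (U ∩ V)) :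
    ContinuousOn (fun x => ρ x * g x) U := by
  intro x hx
  by_cases hxV : x ∈ V
  · exact ((hρ.continuousOn.mul hg x ⟨hx, hxV⟩).mono_of_mem_nhdsWithin
      (inter_mem_nhdsWithin U (hV.mem_nhds hxV)))
  · refine (continuousAt_const (y := (0 : R))).congr ?_ |>.continuousWithinAt
    filter_upwards [notMem_tsupport_iff_eventuallyEq.mp fun h => hxV (hsupp h)] with y hy
    simp [hy]

theorem exists_continuous_add_eq_one_of_union_eq_univ [NormalSpace X] {U V : Set X}
    (hU : IsOpen U) (hV : IsOpen V) (hUV : U ∪ V = univ) :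
    ∃ ρ σ : C(X, ℝ), tsupport ρ ⊆ U ∧ tsupport σ ⊆ V ∧ ∀ x, ρ x + σ x = 1 := by
  obtain ⟨p, hp⟩ := PartitionOfUnity.exists_isSubordinate_of_locallyFinite (s := univ)
    isClosed_univ (fun b : Bool => cond b U V) (by rintro (_ | _) <;> assumption)
    (locallyFinite_of_finite _) (by rw [← union_eq_iUnion]; exact hUV.ge)
  refine ⟨p true, p false, hp true, hp false, fun x => ?_⟩
  have := p.sum_eq_one (mem_univ x)
  rwa [finsum_eq_sum_of_fintype, Fintype.sum_bool] at this

/- This is `H¹(X, ℤ) = 0`. Over `ℝ` a partition of unity splits `ν`; modulo `ℤ` the two halves glue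
to a circle-valued function, and subtracting a real lift of it makes the splitting integral. -/
theorem exists_continuousOn_int_and_continuousOn_add [SimplyConnectedSpace X]
    [LocallyPathConnectedSpace X] [NormalSpace X] {U V : Set X} (hU : IsOpen U) (hV : IsOpen V)
    (hUV : U ∪ V = univ) {ν : X → ℤ} (hν : ContinuousOn ν (U ∩ V)) :
    ∃ α : X → ℤ, ContinuousOn α U ∧ ContinuousOn (fun x => α x + ν x) V := by
  obtain ⟨ρ, σ, hρ, hσ, hsum⟩ := exists_continuous_add_eq_one_of_union_eq_univ hU hV hUV
  have hνℝ : ContinuousOn (fun x => (ν x : ℝ)) (U ∩ V) :=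
    Int.isClosedEmbedding_coe_real.continuous.comp_continuousOn hν
  have hσU : ContinuousOn (fun x => σ x * ν x) U :=
    continuousOn_mul_of_tsupport_subset hV σ.continuous hσ hνℝ
  have hρV : ContinuousOn (fun x => ρ x * ν x) V :=
    continuousOn_mul_of_tsupport_subset hU ρ.continuous hρ (by rwa [inter_comm])
  have hsplit (x : X) : σ x * ν x = ν x - ρ x * ν x := by
    rw [← sub_eq_of_eq_add' (hsum x).symm]
    ring
  have hΦ : Continuous fun x => ((σ x * ν x : ℝ) : AddCircle (1 : ℝ)) := by
    have hΦU := (AddCircle.continuous_mk' (1 : ℝ)).comp_continuousOn hσU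
    have hΦV : ContinuousOn (fun x => ((σ x * ν x : ℝ) : AddCircle (1 : ℝ))) V := by
      refine ((AddCircle.continuous_mk' (1 : ℝ)).comp_continuousOn hρV.neg).congr fun x _ => ?_
      rw [hsplit, sub_eq_add_neg]
      simp
    rw [← continuousOn_univ, ← hUV]
    exact hΦU.union_of_isOpen hΦV hU hV
  obtain ⟨x₀⟩ := (inferInstance : Nonempty X)
  obtain ⟨θ, ⟨-, hθ⟩, -⟩ := (AddCircle.isCoveringMap_coe (1 : ℝ)).existsUnique_continuousMap_lifts
    ⟨_, hΦ⟩ x₀ (σ x₀ * ν x₀) rfl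
  have hint (x : X) : ∃ n : ℤ, (n : ℝ) = θ x - σ x * ν x := by
    obtain ⟨n, hn⟩ := (AddCircle.coe_eq_zero_iff (1 : ℝ) (x := θ x - σ x * ν x)).mp <| by
      rw [AddCircle.coe_sub, sub_eq_zero]
      exact congrFun hθ x
    exact ⟨n, by simpa using hn⟩
  choose α hα using hint
  refine ⟨α, ?_, ?_⟩ <;> rw [Int.isClosedEmbedding_coe_real.isInducing.continuousOn_iff]
  · exact (θ.continuous.continuousOn.sub hσU).congr fun x _ => hα x
  · refine (θ.continuous.continuousOn.add hρV).congr fun x _ => ?_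
    simp only [Function.comp_apply, Pi.add_apply, Int.cast_add, hα, hsplit]
    ring

end

/-! ### Sections of local homeomorphisms to the line -/

section
variable {M : Type*} {h : M → ℝ} {x y z : M}

/-- `x` and `y` are the end points of a continuous section of `h : M → ℝ` over the interval with
end points `h x` and `h y`. When `h` is a local homeomorphism and `M` is Hausdorff this is an
equivalence relation, whose classes are the connected components of `M`. -/
def JoinedBySection [TopologicalSpace M] (h : M → ℝ) (x y : M) : Prop :=
  ∃ τ : ℝ → M, ContinuousOn τ (uIcc (h x) (h y)) ∧ (∀ t ∈ uIcc (h x) (h y), h (τ t) = t) ∧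
    τ (h x) = x ∧ τ (h y) = y

namespace JoinedBySection
variable [TopologicalSpace M]

theorem eq_of_apply_eq (hxy : JoinedBySection h x y) (hh : h x = h y) : x = y := by
  obtain ⟨τ, -, -, hx, hy⟩ := hxy
  rw [← hx, ← hy, hh]

theorem symm (hxy : JoinedBySection h x y) : JoinedBySection h y x := by
  obtain ⟨τ, hτ, hsec, hx, hy⟩ := hxy
  rw [uIcc_comm] at hτ hsec
  exact ⟨τ, hτ, hsec, hy, hx⟩

theorem trans [T2Space M] (hloc : IsLocalHomeomorph h) (hxy : JoinedBySection h x y)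
    (hyz : JoinedBySection h y z) : JoinedBySection h x z := by
  classical
  obtain ⟨τ, hτ, hτsec, hτx, hτy⟩ := hxy
  obtain ⟨σ, hσ, hσsec, hσy, hσz⟩ := hyz
  have hEq : EqOn τ σ (uIcc (h x) (h y) ∩ uIcc (h y) (h z)) :=
    (T2Space.isSeparatedMap h).eqOn_of_comp_eqOn hloc.isLocallyInjective
      (ordConnected_uIcc.inter ordConnected_uIcc).isPreconnected
      (hτ.mono inter_subset_left) (hσ.mono inter_subset_right)
      (fun t ht => (hτsec t ht.1).trans (hσsec t ht.2).symm)
      ⟨right_mem_uIcc, left_mem_uIcc⟩ (hτy.trans hσy.symm)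
  let θ := (uIcc (h x) (h y)).piecewise τ σ
  have hθτ : EqOn θ τ (uIcc (h x) (h y)) := piecewise_eqOn _ _ _
  have hθσ : EqOn θ σ (uIcc (h y) (h z)) := fun t ht => by
    by_cases htx : t ∈ uIcc (h x) (h y)
    · exact (hθτ htx).trans (hEq ⟨htx, ht⟩)
    · exact piecewise_eq_of_notMem _ _ _ htx
  have hsub : uIcc (h x) (h z) ⊆ uIcc (h x) (h y) ∪ uIcc (h y) (h z) :=
    uIcc_subset_uIcc_union_uIcc
  refine ⟨θ, ((hτ.congr hθτ).union_of_isClosed (hσ.congr hθσ) isClosed_Icc isClosed_Icc).mono hsub,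
    fun t ht => ?_, (hθτ left_mem_uIcc).trans hτx, (hθσ right_mem_uIcc).trans hσz⟩
  rcases hsub ht with ht | ht
  · rw [hθτ ht, hτsec t ht]
  · rw [hθσ ht, hσsec t ht]

end JoinedBySection

variable [TopologicalSpace M]

theorem eventually_joinedBySection (hloc : IsLocalHomeomorph h) (x : M) :
    ∀ᶠ y in 𝓝 x, JoinedBySection h x y := by
  let e := hloc.localInverseAt x
  obtain ⟨ε, hε, hball⟩ := Metric.isOpen_iff.mp e.open_source (h x) (by simp [e])
  filter_upwards [e.open_target.mem_nhds (by simp [e]),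
    hloc.continuous.continuousAt.preimage_mem_nhds (Metric.ball_mem_nhds _ hε)] with y hy hyx
  have hsub : uIcc (h x) (h y) ⊆ e.source :=
    ((convex_ball (h x) ε).ordConnected.uIcc_subset (Metric.mem_ball_self hε) hyx).trans hball
  refine ⟨e, e.continuousOn.mono hsub, fun t ht => ?_, by simp [e], ?_⟩
  · simpa [e] using e.left_inv (hsub ht)
  · simpa [e] using e.right_inv hy

theorem exists_isClopen_injOn_of_isLocalHomeomorph [T2Space M] (hloc : IsLocalHomeomorph h)
    (x : M) : ∃ A : Set M, x ∈ A ∧ IsClopen A ∧ InjOn h A := by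
  have hnear := eventually_joinedBySection hloc
  refine ⟨{y | JoinedBySection h x y}, mem_of_mem_nhds (hnear x), ⟨⟨?_⟩, ?_⟩, ?_⟩
  · refine isOpen_iff_mem_nhds.mpr fun y hy => ?_
    filter_upwards [hnear y] with z hyz hxz
    exact hy (hxz.trans hloc hyz.symm)
  · refine isOpen_iff_mem_nhds.mpr fun y hxy => ?_
    filter_upwards [hnear y] with z hyz using hxy.trans hloc hyz
  · exact fun y hxy z hxz hyz => (hxy.symm.trans hloc hxz).eq_of_apply_eq hyz

end

section
variable {X Y : Type*} [TopologicalSpace X] [TopologicalSpace Y] {f : X → Y}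

theorem isLocalHomeomorph_restrictPreimage {s : Set Y} (hf : IsLocalHomeomorphOn f (f ⁻¹' s)) :
    IsLocalHomeomorph (s.restrictPreimage f) := by
  refine isLocalHomeomorph_iff_isOpenEmbedding_restrict.mpr fun x => ?_
  obtain ⟨e, hx, rfl⟩ := hf x x.2
  have hcont : ContinuousOn (s.restrictPreimage e) ((↑) ⁻¹' e.source) :=
    IsInducing.subtypeVal.continuousOn_iff.mpr <|
      e.continuousOn.comp continuous_subtype_val.continuousOn fun _ => id
  refine ⟨(↑) ⁻¹' e.source, (e.open_source.preimage continuous_subtype_val).mem_nhds hx,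
    .of_continuous_injective_isOpenMap hcont.domRestrict (fun a b hab => ?_) fun W hW => ?_⟩
  · exact Subtype.ext (Subtype.ext (e.injOn a.2 b.2 (congrArg Subtype.val hab)))
  · obtain ⟨W', hW', rfl⟩ := isOpen_induced_iff.mp hW
    obtain ⟨O, hO, rfl⟩ := isOpen_induced_iff.mp hW'
    convert! (e.isOpen_image_source_inter hO).preimage continuous_subtype_val using 1
    ext y
    constructor
    · rintro ⟨a, ha, rfl⟩
      exact ⟨a, ⟨a.2, ha⟩, rfl⟩
    · rintro ⟨a, ⟨ha, haO⟩, hay⟩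
      exact ⟨⟨⟨a, mem_preimage.mpr (hay ▸ y.2)⟩, ha⟩, haO, Subtype.ext hay⟩

end

/-! ### Jump functions across arcs of a level line -/

section
variable {f : ℂ → ℂ} {c : ℝ}

theorem isLocalHomeomorphOn_deriv_ne_zero (hf : Differentiable ℂ f) :
    IsLocalHomeomorphOn f {z | deriv f z ≠ 0} := fun z hz =>
  have hstrict := (hf.analyticAt z).hasStrictDerivAt.hasStrictFDerivAt_equiv hz
  ⟨hstrict.toOpenPartialHomeomorph f, hstrict.mem_toOpenPartialHomeomorph_source,
    hstrict.toOpenPartialHomeomorph_coe.symm⟩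

/-- The vertical line `re w = c` in the complex plane, parametrized by the imaginary part. -/
def verticalLineHomeomorph (c : ℝ) : {w : ℂ | w.re = c} ≃ₜ ℝ where
  toFun w := w.1.im
  invFun t := ⟨⟨c, t⟩, rfl⟩
  left_inv w := Subtype.ext (Complex.ext w.2.symm rfl)
  right_inv _ := rfl
  continuous_toFun := by fun_prop
  continuous_invFun := by
    refine Continuous.subtype_mk ?_ _
    exact Complex.equivRealProdCLM.symm.continuous.comp (continuous_const.prodMk continuous_id)

theorem exists_isClosed_injOn_of_deriv_ne_zero (hf : Differentiable ℂ f)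
    (hc : ∀ z, (f z).re = c → deriv f z ≠ 0) {q : ℂ} (hq : (f q).re = c) :
    ∃ A B : Set ℂ, IsClosed A ∧ IsClosed B ∧ Disjoint A B ∧ A ∪ B = {z | (f z).re = c} ∧
      q ∈ A ∧ InjOn f A := by
  let L : Set ℂ := {z | (f z).re = c}
  have hL : IsClosed L := isClosed_eq (Complex.continuous_re.comp hf.continuous) continuous_const
  have hloc : IsLocalHomeomorph
      (verticalLineHomeomorph c ∘ {w : ℂ | w.re = c}.restrictPreimage f) :=
    (verticalLineHomeomorph c).isLocalHomeomorph.comp <|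
      isLocalHomeomorph_restrictPreimage ((isLocalHomeomorphOn_deriv_ne_zero hf).mono hc)
  obtain ⟨A, hqA, hA, hinj⟩ := exists_isClopen_injOn_of_isLocalHomeomorph hloc (⟨q, hq⟩ : L)
  refine ⟨(↑) '' A, (↑) '' Aᶜ, hL.isClosedEmbedding_subtypeVal.isClosedMap _ hA.isClosed,
    hL.isClosedEmbedding_subtypeVal.isClosedMap _ hA.compl.isClosed,
    (disjoint_image_iff Subtype.val_injective).mpr disjoint_compl_right, ?_, ⟨_, hqA, rfl⟩, ?_⟩
  · rw [← image_union, union_compl_self, image_univ]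
    exact Subtype.range_coe
  · rintro _ ⟨a, ha, rfl⟩ _ ⟨b, hb, rfl⟩ hab
    rw [hinj ha hb (congrArg Complex.im hab)]

theorem continuousOn_indicator_lt {X : Type*} [TopologicalSpace X] {g : X → ℝ}
    (hg : Continuous g) (c : ℝ) :
    ContinuousOn ({x | c < g x}.indicator (1 : X → ℤ)) {x | g x ≠ c} := by
  classical
  rw [← piecewise_eq_indicator]
  exact ContinuousOn.piecewise
    (fun _ ha => absurd (frontier_lt_subset_eq continuous_const hg ha.2).symm ha.1)
    continuousOn_const continuousOn_const

/- The indicator function of `re f > c` jumps along the whole level line. Splitting the line into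
the component of `q` and the rest, and splitting this function accordingly, leaves the jump along
that component only; as `f` is injective there, `q` is its only point in the fibre. -/
theorem exists_int_jump (hf : Differentiable ℂ f) (hc : ∀ z, (f z).re = c → deriv f z ≠ 0)
    {q : ℂ} (hq : (f q).re = c) :
    ∃ α : ℂ → ℤ, ∀ S : Set ℂ, IsPreconnected S → ∀ x ∈ S, ∀ y ∈ S,
      ((∀ z ∈ S, (f z).re = c → f z = f q ∧ z ≠ q) → α x = α y) ∧
      ((∀ z ∈ S, (f z).re = c → z = q) → (f x).re < c → c < (f y).re → α x = α y + 1) := by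
  obtain ⟨A, B, hA, hB, hAB, hunion, hqA, hinj⟩ := exists_isClosed_injOn_of_deriv_ne_zero hf hc hq
  have hmem (z : ℂ) : (f z).re = c ↔ z ∈ A ∪ B := by rw [hunion]; rfl
  have hcover : Aᶜ ∪ Bᶜ = univ := by rw [← compl_inter, hAB.inter_eq, compl_empty]
  have hν := continuousOn_indicator_lt (Complex.continuous_re.comp hf.continuous) c
  obtain ⟨α, hαA, hαB⟩ := exists_continuousOn_int_and_continuousOn_add hA.isOpen_compl
    hB.isOpen_compl hcover (hν.mono fun z hz h => ((hmem z).mp h).elim hz.1 hz.2)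
  refine ⟨α, fun S hS x hx y hy => ⟨fun h => ?_, fun h hxc hyc => ?_⟩⟩
  · refine hS.constant (hαA.mono fun z hz hzA => ?_) hx hy
    obtain ⟨hzq, hne⟩ := h z hz ((hmem z).mpr (.inl hzA))
    exact hne (hinj hzA hqA hzq)
  · have hSB : S ⊆ Bᶜ := fun z hz hzB =>
      disjoint_left.mp hAB hqA (h z hz ((hmem z).mpr (.inr hzB)) ▸ hzB)
    simpa [hxc.le, hyc] using hS.constant (hαB.mono hSB) hx hy

end

/-! ### Fibres and nodal components -/

theorem card_lt_card_of_sub_eq_single {R ι V : Type*} [CommRing R] [Nontrivial R] [Fintype ι]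
    [DecidableEq ι] [Fintype V] [Nonempty V] {s t : ι → V} {φ : ι → V → R}
    (h : ∀ i j, φ i (t j) - φ i (s j) = Pi.single (M := fun _ => R) i 1 j) :
    Fintype.card ι < Fintype.card V := by
  have hindep : LinearIndependent R (fun o : Option ι => o.elim (1 : V → R) φ) := by
    rw [Fintype.linearIndependent_iff]
    intro a ha
    have hval (v : V) : a none + ∑ i, a (some i) * φ i v = 0 := by
      simpa [Fintype.sum_option] using congrFun ha v
    have hsome (j : ι) : a (some j) = 0 := by
      have hdiff : ∑ i, a (some i) * (φ i (t j) - φ i (s j)) = 0 := by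
        simp_rw [mul_sub, Finset.sum_sub_distrib]
        linear_combination hval (t j) - hval (s j)
      simpa [h, Pi.single_apply] using hdiff
    obtain ⟨v⟩ := ‹Nonempty V›
    exact Option.rec (by simpa [hsome] using hval v) hsome
  simpa using hindep.fintype_card_le_finrank

theorem eventually_exists_isPreconnected_ne {X Y : Type*} [TopologicalSpace X]
    [LocallyPathConnectedSpace X] [TopologicalSpace Y] [T2Space Y] {g : X → Y} (hg : Continuous g)
    {c₀ : Y} {x y : X} (hy : g y ≠ c₀) (hxy : connectedComponentIn {z | g z ≠ c₀} x =
      connectedComponentIn {z | g z ≠ c₀} y) :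
    ∀ᶠ c in 𝓝 c₀, ∃ S : Set X, IsPreconnected S ∧ x ∈ S ∧ y ∈ S ∧ ∀ z ∈ S, g z ≠ c := by
  have hopen : IsOpen {z | g z ≠ c₀} := isOpen_ne_fun hg continuous_const
  have hycomp := mem_connectedComponentIn (F := {z | g z ≠ c₀}) hy
  have hxcomp : x ∈ connectedComponentIn {z | g z ≠ c₀} y := by
    rw [← hxy] at hycomp ⊢
    exact mem_connectedComponentIn (connectedComponentIn_nonempty_iff.mp ⟨y, hycomp⟩)
  have hpath : IsPathConnected (connectedComponentIn {z | g z ≠ c₀} y) :=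
    hopen.connectedComponentIn.isConnected_iff_isPathConnected.mp
      (isConnected_connectedComponentIn_iff.mpr hy)
  obtain ⟨γ, hγ⟩ := hpath.joinedIn x hxcomp y hycomp
  have hclosed : IsClosed (g '' range γ) := ((isCompact_range γ.continuous).image hg).isClosed
  have hc₀ : c₀ ∉ g '' range γ := by
    rintro ⟨_, ⟨t, rfl⟩, ht⟩
    exact connectedComponentIn_subset _ _ (hγ t) ht
  filter_upwards [hclosed.isOpen_compl.mem_nhds hc₀] with c hc
  exact ⟨range γ, isPreconnected_range γ.continuous, ⟨0, γ.source⟩, ⟨1, γ.target⟩,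
    fun z hz hzc => hc ⟨z, hz, hzc⟩⟩

theorem eventually_injective {ι X Y : Type*} [Finite ι] [TopologicalSpace X] [TopologicalSpace Y]
    [T2Space Y] {γ : ι → X → Y} {x₀ : X} (hγ : ∀ i, ContinuousAt (γ i) x₀)
    (hinj : Function.Injective fun i => γ i x₀) :
    ∀ᶠ x in 𝓝 x₀, Function.Injective fun i => γ i x := by
  have hne (i j : ι) : ∀ᶠ x in 𝓝 x₀, i ≠ j → γ i x ≠ γ j x := by
    rcases eq_or_ne i j with rfl | hij
    · simp
    · filter_upwards [((hγ i).ne_iff_eventually_ne (hγ j)).mp (hinj.ne hij)] with x hx _ using hx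
  filter_upwards [eventually_all.mpr fun i => eventually_all.mpr (hne i)] with x hx i j hij
  exact not_imp_not.mp (hx i j) hij

/-- The nodal component of a point of `S`, as an element of the type of all nodal components. -/
def nodalComponent {X : Type*} [TopologicalSpace X] {S : Set X} (x : S) : nodalComponents S :=
  ⟨connectedComponentIn S x, x, x.2, rfl⟩

theorem nodalComponent_surjective {X : Type*} [TopologicalSpace X] {S : Set X} :
    Function.Surjective (nodalComponent (S := S)) := fun ⟨_, x, hx, h⟩ => ⟨⟨x, hx⟩, Subtype.ext h⟩

theorem eventually_encard_le_encard_inter_preimage {X Y : Type*} [TopologicalSpace X] [T2Space X]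
    [TopologicalSpace Y] {f : X → Y} (hf : IsOpenMap f) {U s : Set X} {y : Y} (hU : IsOpen U)
    (hfin : s.Finite) (hs : s ⊆ U ∩ f ⁻¹' {y}) :
    ∀ᶠ y' in 𝓝 y, s.encard ≤ (U ∩ f ⁻¹' {y'}).encard := by
  obtain ⟨V, hV, hdisj⟩ := hfin.t2_separation
  have hnear (x : X) (hx : x ∈ s) : ∀ᶠ y' in 𝓝 y, ∃ x' ∈ U ∩ V x, f x' = y' :=
    (hf _ (hU.inter (hV x).2)).mem_nhds ⟨x, ⟨(hs hx).1, (hV x).1⟩, (hs hx).2⟩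
  filter_upwards [(eventually_all_finite hfin).mpr hnear] with y' hy'
  choose! g hg hgy using hy'
  refine encard_le_encard_of_injOn (f := g) (fun x hx => ⟨(hg x hx).1, hgy x hx⟩) ?_
  intro x hx x' hx' hxx'
  by_contra hne
  exact disjoint_left.mp (hdisj hx hx' hne) (hg x hx).2 (hxx' ▸ (hg x' hx').2)

/- At a point of `L` whose fibre is largest, the preimages near that fibre exhaust every nearby
fibre. -/
theorem exists_isCompact_eventually_preimage_subset {X Y : Type*} [TopologicalSpace X] [T2Space X]
    [LocallyCompactSpace X] [TopologicalSpace Y] {f : X → Y} (hf : IsOpenMap f) {L : Set Y}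
    (hL : L.Nonempty) {N : ℕ} (hN : ∀ y ∈ L, (f ⁻¹' {y}).encard ≤ N) :
    ∃ y ∈ L, ∃ K, IsCompact K ∧ ∀ᶠ y' in 𝓝[L] y, f ⁻¹' {y'} ⊆ K := by
  have hfin (y : Y) (hy : y ∈ L) : (f ⁻¹' {y}).Finite := (encard_le_coe_iff.mp (hN y hy)).1
  have hbdd : BddAbove ((fun y => (f ⁻¹' {y}).ncard) '' L) :=
    ⟨N, forall_mem_image.mpr fun y hy => (encard_le_coe_iff_finite_ncard_le.mp (hN y hy)).2⟩
  obtain ⟨y, hy, hmax⟩ := Nat.sSup_mem (hL.image _) hbdd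
  obtain ⟨K, hK, hyK⟩ := exists_compact_superset (hfin y hy).isCompact
  refine ⟨y, hy, K, hK, ?_⟩
  filter_upwards [self_mem_nhdsWithin, mem_nhdsWithin_of_mem_nhds <|
    eventually_encard_le_encard_inter_preimage hf isOpen_interior (hfin y hy)
      (subset_inter hyK subset_rfl)] with y' hy' hle
  have heq : interior K ∩ f ⁻¹' {y'} = f ⁻¹' {y'} := by
    refine (hfin y' hy').eq_of_subset_of_encard_le' inter_subset_right (le_trans ?_ hle)
    rw [← (hfin y hy).cast_ncard_eq, ← (hfin y' hy').cast_ncard_eq, Nat.cast_le]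
    exact (le_csSup hbdd ⟨y', hy', rfl⟩).trans hmax.ge
  exact (inter_eq_right.mp heq).trans interior_subset

section
variable {f : ℂ → ℂ} {w : ℂ}

/-- `γ` lifts the horizontal segment of half-width `ρ` centred at `w` through `f`. Its end
points lie in nodal regions on opposite sides of the level line `re f = re w`. -/
structure IsHorizontalArc (f : ℂ → ℂ) (w : ℂ) (ρ : ℝ) (γ : ℝ → ℂ) : Prop where
  pos : 0 < ρ
  continuousOn : ContinuousOn γ (Icc (-ρ) ρ)
  apply_eq : ∀ t ∈ Icc (-ρ) ρ, f (γ t) = w + t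

namespace IsHorizontalArc
variable {ρ : ℝ} {γ : ℝ → ℂ}

theorem re_apply (hγ : IsHorizontalArc f w ρ γ) {t : ℝ} (ht : t ∈ Icc (-ρ) ρ) :
    (f (γ t)).re = w.re + t := by
  simp [hγ.apply_eq t ht]

theorem left_mem (hγ : IsHorizontalArc f w ρ γ) : -ρ ∈ Icc (-ρ) ρ :=
  left_mem_Icc.mpr (by linarith [hγ.pos])

theorem right_mem (hγ : IsHorizontalArc f w ρ γ) : ρ ∈ Icc (-ρ) ρ :=
  right_mem_Icc.mpr (by linarith [hγ.pos])

theorem left_ne (hγ : IsHorizontalArc f w ρ γ) : (f (γ (-ρ))).re ≠ w.re := by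
  simpa [hγ.re_apply hγ.left_mem] using hγ.pos.ne'

theorem right_ne (hγ : IsHorizontalArc f w ρ γ) : (f (γ ρ)).re ≠ w.re := by
  simpa [hγ.re_apply hγ.right_mem] using hγ.pos.ne'

theorem continuousAt (hγ : IsHorizontalArc f w ρ γ) : ContinuousAt γ 0 :=
  hγ.continuousOn.continuousAt (Icc_mem_nhds (neg_neg_iff_pos.mpr hγ.pos) hγ.pos)

end IsHorizontalArc

theorem exists_isHorizontalArc (hf : Differentiable ℂ f) {p : ℂ} (hp : deriv f p ≠ 0) :
    ∃ ρ γ, IsHorizontalArc f (f p) ρ γ ∧ γ 0 = p := by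
  obtain ⟨e, hpe, rfl⟩ := isLocalHomeomorphOn_deriv_ne_zero hf p hp
  have hcont : Continuous fun t : ℝ => e p + t := by fun_prop
  have hnhds : (fun t : ℝ => e p + t) ⁻¹' e.target ∈ 𝓝 0 :=
    (e.open_target.preimage hcont).mem_nhds (by simpa using e.map_source hpe)
  obtain ⟨ρ, hρ, hsub⟩ := Metric.nhds_basis_closedBall.mem_iff.mp hnhds
  rw [Real.closedBall_eq_Icc, zero_sub, zero_add] at hsub
  exact ⟨ρ, fun t => e.symm (e p + t), ⟨hρ, e.continuousOn_symm.comp hcont.continuousOn hsub,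
    fun t ht => e.right_inv (hsub ht)⟩, by simpa using e.left_inv hpe⟩

theorem exists_int_jump_of_isHorizontalArc {ι : Type*} [DecidableEq ι] (hf : Differentiable ℂ f)
    {ρ : ι → ℝ} {γ : ι → ℝ → ℂ} (hγ : ∀ i, IsHorizontalArc f w (ρ i) (γ i)) {t : ℝ}
    (ht : ∀ i, t ∈ Ioo (-ρ i) (ρ i)) (hinj : Function.Injective fun i => γ i t)
    (hc : ∀ z, (f z).re = w.re + t → deriv f z ≠ 0) (i : ι) :
    ∃ α : ℂ → ℤ,
      (∀ S, IsPreconnected S → (∀ z ∈ S, (f z).re ≠ w.re + t) → ∀ x ∈ S, ∀ y ∈ S, α x = α y) ∧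
      ∀ j, α (γ j (-ρ j)) - α (γ j (ρ j)) = Pi.single (M := fun _ => ℤ) i 1 j := by
  have hmem (j : ι) : t ∈ Icc (-ρ j) (ρ j) := Ioo_subset_Icc_self (ht j)
  obtain ⟨α, hα⟩ := exists_int_jump hf hc ((hγ i).re_apply (hmem i))
  have hcross (j : ι) : ∀ z ∈ γ j '' Icc (-ρ j) (ρ j), (f z).re = w.re + t → z = γ j t := by
    rintro _ ⟨s, hs, rfl⟩ hst
    rw [(hγ j).re_apply hs, add_right_inj] at hst
    rw [hst]
  refine ⟨α, fun S hS hSt x hx y hy => (hα S hS x hx y hy).1 fun z hz h => absurd h (hSt z hz),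
    fun j => ?_⟩
  have hjump := hα _ (isPreconnected_Icc.image _ (hγ j).continuousOn)
    _ (mem_image_of_mem _ (hγ j).left_mem) _ (mem_image_of_mem _ (hγ j).right_mem)
  rcases eq_or_ne j i with rfl | hji
  · have h := hjump.2 (hcross j)
      (by rw [(hγ j).re_apply (hγ j).left_mem]; linarith [(ht j).1])
      (by rw [(hγ j).re_apply (hγ j).right_mem]; linarith [(ht j).2])
    rw [Pi.single_eq_same, h, add_sub_cancel_left]
  · have h := hjump.1 fun z hz hzt => by
      rw [hcross j z hz hzt, (hγ j).apply_eq t (hmem j), (hγ i).apply_eq t (hmem i)]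
      exact ⟨rfl, hinj.ne hji⟩
    rw [Pi.single_eq_of_ne hji, h, sub_self]

theorem countable_setOf_deriv_eq_zero (hf : Differentiable ℂ f) (hconst : ¬ ∃ c, ∀ z, f z = c) :
    {z | deriv f z = 0}.Countable := by
  have han : AnalyticOnNhd ℂ (deriv f) univ := fun z _ => (hf.analyticAt z).deriv
  obtain ⟨x, hx⟩ : ∃ x, deriv f x ≠ 0 := by
    by_contra! h
    exact hconst ⟨f 0, fun z => is_const_of_deriv_eq_zero hf h z 0⟩
  have hcodisc := han.preimage_zero_mem_codiscrete hx
  have hdisc : IsDiscrete {z | deriv f z = 0} :=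
    inter_univ {z | deriv f z = 0} ▸ isDiscrete_of_codiscreteWithin hcodisc
  exact (HereditarilyLindelofSpace.isLindelof _).countable_of_isDiscrete hdisc

theorem dense_setOf_forall_eq_imp_deriv_ne_zero (hf : Differentiable ℂ f)
    (hconst : ¬ ∃ c, ∀ z, f z = c) (g : ℂ → ℝ) :
    Dense {t : ℝ | ∀ z, g z = t → deriv f z ≠ 0} := by
  convert! ((countable_setOf_deriv_eq_zero hf hconst).image g).dense_compl ℝ using 1
  ext t
  simp [imp.swap]

/- A component is evaluated at a representative point, using a jump function across a nearby regular
level, which for a small shift no longer separates the representative from the ends of the arcs. -/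
theorem exists_potential_of_isHorizontalArc {ι : Type*} [Finite ι] [DecidableEq ι]
    (hf : Differentiable ℂ f) (hconst : ¬ ∃ c, ∀ z, f z = c) {ρ : ι → ℝ} {γ : ι → ℝ → ℂ}
    (hγ : ∀ i, IsHorizontalArc f w (ρ i) (γ i)) (hinj : Function.Injective fun i => γ i 0) :
    ∃ φ : ι → nodalComponents {z | (f z).re ≠ w.re} → ℤ, ∀ i j,
      φ i (nodalComponent ⟨_, (hγ j).left_ne⟩) - φ i (nodalComponent ⟨_, (hγ j).right_ne⟩) =
        Pi.single (M := fun _ => ℤ) i 1 j := by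
  let rep : nodalComponents {z | (f z).re ≠ w.re} → {z | (f z).re ≠ w.re} :=
    Function.surjInv nodalComponent_surjective
  have hrep (x : {z | (f z).re ≠ w.re}) : ∀ᶠ t in 𝓝 (0 : ℝ), ∃ S : Set ℂ, IsPreconnected S ∧
      ↑(rep (nodalComponent x)) ∈ S ∧ ↑x ∈ S ∧ ∀ z ∈ S, (f z).re ≠ w.re + t := by
    have hshift : Tendsto (fun t : ℝ => w.re + t) (𝓝 0) (𝓝 w.re) := by
      simpa using (continuous_const_add w.re).tendsto 0
    exact hshift.eventually <| eventually_exists_isPreconnected_ne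
      (Complex.continuous_re.comp hf.continuous) x.2
      (congrArg Subtype.val (Function.surjInv_eq nodalComponent_surjective (nodalComponent x)))
  have hsmall (i : ι) : ∀ᶠ t in 𝓝 0, t ∈ Ioo (-ρ i) (ρ i) :=
    Ioo_mem_nhds (neg_neg_iff_pos.mpr (hγ i).pos) (hγ i).pos
  obtain ⟨t, hreg, hinj, harc⟩ := (dense_setOf_forall_eq_imp_deriv_ne_zero hf hconst
    fun z => (f z).re - w.re).inter_nhds_nonempty <|
    (eventually_injective (fun i => (hγ i).continuousAt) hinj).and <| eventually_all.mpr fun i =>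
      (hsmall i).and ((hrep ⟨_, (hγ i).left_ne⟩).and (hrep ⟨_, (hγ i).right_ne⟩))
  choose α hα hjump using
    exists_int_jump_of_isHorizontalArc hf hγ (fun i => (harc i).1) hinj
      fun z hz => hreg z (sub_eq_of_eq_add' hz)
  refine ⟨fun i C => α i (rep C), fun i j => ?_⟩
  obtain ⟨-, ⟨S, hS, hrepS, hxS, hSt⟩, ⟨T, hT, hrepT, hyT, hTt⟩⟩ := harc j
  beta_reduce
  rw [hα i S hS hSt _ hrepS _ hxS, hα i T hT hTt _ hrepT _ hyT, hjump]

theorem nodalComponents_re_ne_nonempty (hf : Differentiable ℂ f) (hconst : ¬ ∃ c, ∀ z, f z = c)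
    (c : ℝ) : (nodalComponents {z | (f z).re ≠ c}).Nonempty := by
  by_contra! hempty
  have hre (z : ℂ) : (f z).re = c := by
    by_contra hz
    exact hempty.subset ⟨z, hz, rfl⟩
  obtain ⟨a, ha⟩ := AnalyticOnNhd.eq_const_of_re_eq_const (fun z _ => hf.analyticAt z)
    (fun z _ => hre z) isOpen_univ isConnected_univ
  exact hconst ⟨a, fun z => ha z (mem_univ z)⟩

theorem card_lt_ncard_nodalComponents (hf : Differentiable ℂ f) (hconst : ¬ ∃ c, ∀ z, f z = c)
    (hfin : (nodalComponents {z | (f z).re ≠ w.re}).Finite) {s : Finset ℂ}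
    (hs : ∀ z ∈ s, f z = w ∧ deriv f z ≠ 0) :
    s.card < (nodalComponents {z | (f z).re ≠ w.re}).ncard := by
  classical
  have := hfin.fintype
  have := (nodalComponents_re_ne_nonempty hf hconst w.re).to_subtype
  choose ρ γ hγ hγ₀ using fun p : s => (hs p p.2).1 ▸ exists_isHorizontalArc hf (hs p p.2).2
  obtain ⟨φ, hφ⟩ := exists_potential_of_isHorizontalArc hf hconst hγ <| by
    simpa only [hγ₀] using Subtype.val_injective
  rw [← Fintype.card_coe s, ← Nat.card_coe_set_eq, Nat.card_eq_fintype_card]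
  exact card_lt_card_of_sub_eq_single hφ

theorem isOpenMap_of_not_const (hf : Differentiable ℂ f) (hconst : ¬ ∃ c, ∀ z, f z = c) :
    IsOpenMap f :=
  (AnalyticOnNhd.is_constant_or_isOpenMap fun z _ => hf.analyticAt z).resolve_left hconst

theorem encard_preimage_lt_ncard_nodalComponents (hf : Differentiable ℂ f)
    (hconst : ¬ ∃ c, ∀ z, f z = c) (hfin : (nodalComponents {z | (f z).re ≠ w.re}).Finite) :
    (f ⁻¹' {w}).encard < (nodalComponents {z | (f z).re ≠ w.re}).ncard := by
  by_contra! hle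
  obtain ⟨s, hs, hcard⟩ := exists_subset_encard_eq hle
  have hshift : Tendsto (fun t : ℝ => w + t * Complex.I) (𝓝 0) (𝓝 w) := by
    simpa using (by fun_prop : Continuous fun t : ℝ => w + t * Complex.I).tendsto 0
  obtain ⟨t, hreg, ht⟩ := (dense_setOf_forall_eq_imp_deriv_ne_zero hf hconst
    fun z => (f z).im - w.im).inter_nhds_nonempty <| hshift.eventually <|
      eventually_encard_le_encard_inter_preimage (isOpenMap_of_not_const hf hconst) isOpen_univ
        (finite_of_encard_eq_coe hcard) (by rwa [univ_inter])
  simp only [mem_ofPred_eq, univ_inter, hcard] at ht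
  obtain ⟨s', hs', hcard'⟩ := exists_subset_encard_eq ht
  lift s' to Finset ℂ using finite_of_encard_eq_coe hcard'
  have hre : (w + t * Complex.I).re = w.re := by simp
  rw [← hre] at hfin
  have hlt := card_lt_ncard_nodalComponents hf hconst hfin (s := s') fun z hz =>
    ⟨hs' hz, hreg z (by simp [show f z = _ from hs' hz])⟩
  rw [hre, ← Nat.cast_lt (α := ℕ∞), ← encard_coe_eq_coe_finsetCard, hcard'] at hlt
  exact hlt.false

theorem exists_segment_eventually_notMem {c : ℝ} (hf : Differentiable ℂ f)
    (hconst : ¬ ∃ c, ∀ z, f z = c) (hfin : (nodalComponents {z | (f z).re ≠ c}).Finite) :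
    ∃ a b : ℂ, a ≠ b ∧ ∀ᶠ z in cocompact ℂ, f z ∉ segment ℝ a b := by
  obtain ⟨a, rfl, K, hK, hev⟩ := exists_isCompact_eventually_preimage_subset
    (isOpenMap_of_not_const hf hconst) (L := {w | w.re = c})
    (N := (nodalComponents {z | (f z).re ≠ c}).ncard) ⟨c, Complex.ofReal_re c⟩
    fun w hw => by subst hw; exact (encard_preimage_lt_ncard_nodalComponents hf hconst hfin).le
  obtain ⟨ε, hε, hball⟩ := Metric.mem_nhdsWithin_iff.mp hev
  have hconvex : Convex ℝ (Metric.ball a ε ∩ {w | w.re = a.re}) :=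
    (convex_ball a ε).inter (convex_hyperplane Complex.reLm.isLinear a.re)
  refine ⟨a, a + (ε / 2 : ℝ) * Complex.I, by simp [hε.ne'], ?_⟩
  filter_upwards [hK.compl_mem_cocompact] with z hz hmem
  refine hz (hball (hconvex.segment_subset ⟨Metric.mem_ball_self hε, rfl⟩ ⟨?_, by simp⟩ hmem) rfl)
  simp [abs_of_pos hε, hε]

end

/-! ### Entire functions omitting a segment near infinity -/

section
variable {g : ℂ → ℂ} {z₀ : ℂ}

theorem meromorphicAt_of_eventually_norm_le {C : ℝ}
    (hg : ∀ᶠ z in 𝓝[≠] z₀, DifferentiableAt ℂ g z) (hC : ∀ᶠ z in 𝓝[≠] z₀, ‖g z‖ ≤ C) :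
    MeromorphicAt g z₀ := by
  have hs : {z | z ≠ z₀ → DifferentiableAt ℂ g z ∧ ‖g z‖ ≤ C} ∈ 𝓝 z₀ :=
    eventually_nhdsWithin_iff.mp (hg.and hC)
  have han := (Complex.differentiableOn_update_limUnder_of_bddAbove hs
    (fun z hz => (hz.1 hz.2).1.differentiableWithinAt)
    ⟨C, forall_mem_image.mpr fun z hz => (hz.1 hz.2).2⟩).analyticAt hs
  refine han.meromorphicAt.congr ?_
  filter_upwards [self_mem_nhdsWithin] with z hz using Function.update_of_ne hz _ _

theorem re_exp_log_div_two_pos {z : ℂ} (hz : z ∈ Complex.slitPlane) :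
    0 < (Complex.exp (Complex.log z / 2)).re := by
  have hlt : z.arg < Real.pi := (Complex.arg_le_pi z).lt_of_ne (Complex.slitPlane_arg_ne_pi hz)
  have hcos : 0 < Real.cos (z.arg / 2) :=
    Real.cos_pos_of_mem_Ioo ⟨by linarith [Complex.neg_pi_lt_arg z], by linarith⟩
  rw [Complex.exp_re, Complex.div_ofNat_im, Complex.log_im]
  positivity

theorem meromorphicAt_of_eventually_mem_slitPlane
    (hg : ∀ᶠ z in 𝓝[≠] z₀, DifferentiableAt ℂ g z)
    (hslit : ∀ᶠ z in 𝓝[≠] z₀, g z ∈ Complex.slitPlane) : MeromorphicAt g z₀ := by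
  -- The square root `h` of `g` takes values in the right half-plane, so `(1 + h)⁻¹` is bounded.
  let h : ℂ → ℂ := fun z => Complex.exp (Complex.log (g z) / 2)
  have hre : ∀ᶠ z in 𝓝[≠] z₀, 1 < (1 + h z).re := by
    filter_upwards [hslit] with z hz
    simpa [h] using re_exp_log_div_two_pos hz
  have hinv : MeromorphicAt (fun z => (1 + h z)⁻¹) z₀ := by
    refine meromorphicAt_of_eventually_norm_le (C := 1) ?_ ?_
    · filter_upwards [hg, hslit, hre] with z hgz hz hrez
      have hne : 1 + h z ≠ 0 := fun h0 => by norm_num [h0] at hrez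
      exact (((hgz.clog hz).div_const 2).cexp.const_add 1).inv hne
    · filter_upwards [hre] with z hz
      rw [norm_inv]
      exact inv_le_one_of_one_le₀ (hz.le.trans (Complex.re_le_norm _))
  refine ((hinv.inv.sub (MeromorphicAt.const 1 z₀)).pow 2).congr ?_
  filter_upwards [hslit] with z hz
  have hsq : h z ^ 2 = g z := by
    rw [← Complex.exp_nat_mul, Nat.cast_ofNat, mul_div_cancel₀ _ two_ne_zero,
      Complex.exp_log (Complex.slitPlane_ne_zero hz)]
  simpa using hsq

theorem div_mem_slitPlane_of_notMem_segment {a b z : ℂ} (hz : z ∉ segment ℝ a b) :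
    (z - a) / (z - b) ∈ Complex.slitPlane := by
  contrapose! hz
  rw [Complex.mem_slitPlane_iff_not_le_zero, not_not, Complex.le_def] at hz
  obtain ⟨hre, him⟩ := hz
  rcases eq_or_ne z b with rfl | hzb
  · exact right_mem_segment ℝ a z
  set r := -((z - a) / (z - b)).re with hr
  have hr₀ : 0 ≤ r := neg_nonneg.mpr hre
  have hquot : (z - a) / (z - b) = -(r : ℂ) := by
    apply Complex.ext <;> simp [hr, him]
  rw [div_eq_iff (sub_ne_zero.mpr hzb)] at hquot
  have hr₁ : (1 + r : ℂ) ≠ 0 := by exact_mod_cast (by positivity : 1 + r ≠ 0)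
  refine ⟨1 / (1 + r), r / (1 + r), by positivity, by positivity, by field_simp, ?_⟩
  simp only [Complex.real_smul]
  push_cast
  field_simp
  linear_combination -hquot

theorem meromorphicAt_of_eventually_notMem_segment {a b : ℂ} (hab : a ≠ b)
    (hg : ∀ᶠ z in 𝓝[≠] z₀, DifferentiableAt ℂ g z)
    (hseg : ∀ᶠ z in 𝓝[≠] z₀, g z ∉ segment ℝ a b) : MeromorphicAt g z₀ := by
  have hb : ∀ᶠ z in 𝓝[≠] z₀, g z - b ≠ 0 := by
    filter_upwards [hseg] with z hz h
    exact hz (sub_eq_zero.mp h ▸ right_mem_segment ℝ a b)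
  have hmob : MeromorphicAt (fun z => (g z - a) / (g z - b)) z₀ := by
    refine meromorphicAt_of_eventually_mem_slitPlane ?_ ?_
    · filter_upwards [hg, hb] with z hgz hz using (hgz.sub_const a).div (hgz.sub_const b) hz
    · filter_upwards [hseg] with z hz using div_mem_slitPlane_of_notMem_segment hz
  have hc (c : ℂ) : MeromorphicAt (fun _ => c) z₀ := MeromorphicAt.const c z₀
  refine (((hmob.mul (hc b)).sub (hc a)).div (hmob.sub (hc 1))).congr ?_
  filter_upwards [hb] with z hz
  have hba : b - a ≠ 0 := sub_ne_zero.mpr hab.symm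
  have hsub : (g z - a) / (g z - b) - 1 = (b - a) / (g z - b) := by
    field_simp
    ring
  simp only [Pi.div_apply, Pi.sub_apply, Pi.mul_apply, hsub]
  field_simp
  ring

end

section
variable {f : ℂ → ℂ}
open Asymptotics Bornology

theorem exists_isBigO_pow_of_meromorphicAt_inv (hf : MeromorphicAt (fun z => f z⁻¹) 0) :
    ∃ n : ℕ, f =O[cobounded ℂ] fun z => z ^ n := by
  obtain ⟨n, hn⟩ := hf
  refine ⟨n, ?_⟩
  have hbound := hn.continuousAt.tendsto.isBigO_one ℂ |>.comp_tendsto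
    (tendsto_inv₀_cobounded (α := ℂ))
  refine ((isBigO_refl (fun z : ℂ => z ^ n) _).mul hbound).congr' ?_ ?_
  · filter_upwards [eventually_ne_cobounded 0] with z hz
    simp [hz]
  · simp

theorem exists_polynomial_of_isBigO_pow (hf : Differentiable ℂ f) {n : ℕ}
    (hn : f =O[cobounded ℂ] fun z => z ^ n) : ∃ P : Polynomial ℂ, ∀ z, f z = P.eval z := by
  obtain ⟨C, hC⟩ := hn.bound
  have hzero (m : ℕ) (hm : n < m) : iteratedDeriv m f 0 = 0 := by
    have hle : ∀ᶠ R : ℝ in atTop, ‖iteratedDeriv m f 0‖ ≤ m.factorial * (C * R ^ n) / R ^ m := by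
      rw [← comap_norm_atTop, eventually_comap] at hC
      filter_upwards [hC, eventually_gt_atTop 0] with R hCR hR
      refine Complex.norm_iteratedDeriv_le_of_forall_mem_sphere_norm_le m hR hf.diffContOnCl ?_
      intro z hz
      rw [mem_sphere_zero_iff_norm] at hz
      simpa [hz] using hCR z hz
    have hlim : Tendsto (fun R : ℝ => m.factorial * (C * R ^ n) / R ^ m) atTop (𝓝 0) := by
      simpa [mul_div_assoc] using
        ((tendsto_pow_div_pow_atTop_zero (𝕜 := ℝ) hm).const_mul C).const_mul (m.factorial : ℝ)
    exact norm_le_zero_iff.mp (ge_of_tendsto hlim hle)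
  refine ⟨∑ m ∈ Finset.range (n + 1), Polynomial.monomial m
    ((m.factorial : ℂ)⁻¹ * iteratedDeriv m f 0), fun z => ?_⟩
  rw [← Complex.taylorSeries_eq_of_entire' 0 z hf, tsum_eq_sum (s := Finset.range (n + 1))]
  · simp [Polynomial.eval_finsetSum]
  · intro m hm
    rw [hzero m (by simpa using hm)]
    simp

theorem exists_polynomial_of_eventually_notMem_segment (hf : Differentiable ℂ f) {a b : ℂ}
    (hab : a ≠ b) (hseg : ∀ᶠ z in cobounded ℂ, f z ∉ segment ℝ a b) :
    ∃ P : Polynomial ℂ, ∀ z, f z = P.eval z := by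
  have hmer : MeromorphicAt (fun z => f z⁻¹) 0 := by
    refine meromorphicAt_of_eventually_notMem_segment hab ?_ ?_
    · filter_upwards [self_mem_nhdsWithin] with z hz
      exact (hf z⁻¹).comp z (differentiableAt_inv hz)
    · exact tendsto_inv₀_nhdsNE_zero.eventually hseg
  obtain ⟨n, hn⟩ := exists_isBigO_pow_of_meromorphicAt_inv hmer
  exact exists_polynomial_of_isBigO_pow hf hn

end

/-! ### Polynomials and harmonic functions in the plane -/

section
open Polynomial

theorem encard_preimage_eval_eq_natDegree {K : Type*} [Field K] [IsAlgClosed K] {P : K[X]}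
    {w : K} (hw : ∀ z, P.eval z = w → P.derivative.eval z ≠ 0) :
    (P.eval ⁻¹' {w}).encard = P.natDegree := by
  have hsep : (P - C w).Separable := by
    rw [separable_def, isCoprime_iff_aeval_ne_zero_of_isAlgClosed K K]
    intro z
    simpa [sub_eq_zero, imp_iff_not_or] using hw z
  have hroots : P.eval ⁻¹' {w} = (P - C w).rootSet K := by
    ext z
    simp [mem_rootSet_of_ne hsep.ne_zero, sub_eq_zero]
  rw [hroots, ← coe_fintypeCard, card_rootSet_eq_natDegree hsep (IsAlgClosed.splits _),
    natDegree_sub_C]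

end

theorem exists_polynomial_natDegree_le_ncard_sub_one {f : ℂ → ℂ} {c : ℝ} (hf : Differentiable ℂ f)
    (hfin : (nodalComponents {z | (f z).re ≠ c}).Finite) :
    ∃ P : Polynomial ℂ, P.natDegree ≤ (nodalComponents {z | (f z).re ≠ c}).ncard - 1 ∧
      ∀ z, f z = P.eval z := by
  by_cases hconst : ∃ a, ∀ z, f z = a
  · obtain ⟨a, ha⟩ := hconst
    exact ⟨Polynomial.C a, by simp, by simpa using ha⟩
  obtain ⟨a, b, hab, hseg⟩ := exists_segment_eventually_notMem hf hconst hfin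
  rw [← Metric.cobounded_eq_cocompact] at hseg
  obtain ⟨P, hP⟩ := exists_polynomial_of_eventually_notMem_segment hf hab hseg
  obtain rfl : f = P.eval := funext hP
  refine ⟨P, Nat.le_sub_one_of_lt ?_, fun _ => rfl⟩
  obtain ⟨t, ht⟩ := (dense_setOf_forall_eq_imp_deriv_ne_zero hf hconst
    fun z => (P.eval z).im).nonempty
  have hlt := encard_preimage_lt_ncard_nodalComponents (w := ⟨c, t⟩) hf hconst hfin
  rwa [encard_preimage_eval_eq_natDegree fun z hz =>
    P.deriv (x := z) ▸ ht z (congrArg Complex.im hz), Nat.cast_lt] at hlt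

section
open InnerProductSpace Laplacian

theorem laplacian_comp_linearIsometryEquiv {E F G : Type*} [NormedAddCommGroup E]
    [InnerProductSpace ℝ E] [FiniteDimensional ℝ E] [NormedAddCommGroup F] [InnerProductSpace ℝ F]
    [FiniteDimensional ℝ F] [NormedAddCommGroup G] [NormedSpace ℝ G] (u : F → G) (e : E ≃ₗᵢ[ℝ] F)
    (x : E) : Δ (u ∘ e) x = Δ u (e x) := by
  rw [laplacian_eq_iteratedFDeriv_stdOrthonormalBasis,
    laplacian_eq_iteratedFDeriv_orthonormalBasis u ((stdOrthonormalBasis ℝ E).map e)]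
  refine Finset.sum_congr rfl fun i _ => ?_
  have hcomp : iteratedFDeriv ℝ 2 (u ∘ e) x =
      (iteratedFDeriv ℝ 2 u (e x)).compContinuousLinearMap fun _ => e.toContinuousLinearEquiv := by
    simpa [iteratedFDerivWithin_univ] using
      e.toContinuousLinearEquiv.iteratedFDerivWithin_comp_right u uniqueDiffOn_univ
        (mem_univ (e x)) 2
  rw [hcomp, ContinuousMultilinearMap.compContinuousLinearMap_apply]
  congr 1
  ext j
  fin_cases j <;> simp

theorem laplacian_eq_lapl {n : ℕ} {u : EuclideanSpace ℝ (Fin n) → ℝ} (hu : ContDiff ℝ 2 u)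
    (x : EuclideanSpace ℝ (Fin n)) : Δ u x = lapl u x := by
  have hd : DifferentiableAt ℝ (fderiv ℝ u) x :=
    (hu.fderiv_right (m := 1) le_rfl).differentiable one_ne_zero x
  rw [laplacian_eq_iteratedFDeriv_orthonormalBasis u (EuclideanSpace.basisFun (Fin n) ℝ), lapl]
  refine Finset.sum_congr rfl fun i _ => ?_
  rw [iteratedFDeriv_two_apply, fderiv_clm_apply hd (differentiableAt_const _)]
  simp

theorem HarmonicFn.exists_differentiable_re_eq {u : EuclideanSpace ℝ (Fin 2) → ℝ}
    (hu : HarmonicFn u) : ∃ f : ℂ → ℂ, Differentiable ℂ f ∧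
      ∀ z, (f z).re = u (Complex.orthonormalBasisOneI.repr z) := by
  let e := Complex.orthonormalBasisOneI.repr
  have hharm : HarmonicOnNhd (u ∘ e) univ := fun z _ =>
    ⟨(hu.1.comp e.contDiff).contDiffAt, Eventually.of_forall fun w => by
      rw [laplacian_comp_linearIsometryEquiv, laplacian_eq_lapl hu.1, hu.2, Pi.zero_apply]⟩
  obtain ⟨f, hf, hfu⟩ := hharm.exists_analyticOnNhd_univ_re_eq
  exact ⟨f, fun z => (hf z (mem_univ z)).differentiableAt, congrFun hfu⟩

end

section
open MvPolynomial

theorem totalDegree_aeval_le {R σ : Type*} [CommSemiring R] (P : Polynomial R)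
    (q : MvPolynomial σ R) : (P.aeval q).totalDegree ≤ P.natDegree * q.totalDegree := by
  rw [Polynomial.aeval_eq_sum_range]
  refine totalDegree_finsetSum_le fun i hi => ?_
  calc (P.coeff i • q ^ i).totalDegree ≤ (q ^ i).totalDegree := totalDegree_smul_le _ _
    _ ≤ i * q.totalDegree := totalDegree_pow _ _
    _ ≤ P.natDegree * q.totalDegree := by gcongr; exact Finset.mem_range_succ_iff.mp hi

theorem exists_eval_eq_re_eval {σ : Type*} (p : MvPolynomial σ ℂ) :
    ∃ q : MvPolynomial σ ℝ, q.totalDegree ≤ p.totalDegree ∧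
      ∀ v : σ → ℝ, eval v q = (eval (fun i => (v i : ℂ)) p).re := by
  refine ⟨∑ m ∈ p.support, monomial m (p.coeff m).re, ?_, fun v => ?_⟩
  · exact totalDegree_finsetSum_le fun m hm =>
      (totalDegree_monomial_le m _).trans (le_totalDegree hm)
  · rw [map_sum, eval_eq, Complex.re_sum]
    refine Finset.sum_congr rfl fun m _ => ?_
    rw [eval_monomial, Finsupp.prod, ← Complex.re_mul_ofReal]
    push_cast
    rfl

theorem exists_polyFun_eq_re_eval (P : Polynomial ℂ) :
    ∃ Q : MvPolynomial (Fin 2) ℝ, Q.totalDegree ≤ P.natDegree ∧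
      ∀ x, polyFun Q x = (P.eval (Complex.orthonormalBasisOneI.repr.symm x)).re := by
  let ζ : MvPolynomial (Fin 2) ℂ := X 0 + C Complex.I * X 1
  have hζ : ζ.totalDegree ≤ 1 := by
    refine (totalDegree_add _ _).trans (max_le (totalDegree_X 0).le ?_)
    simpa [totalDegree_X] using totalDegree_mul (C Complex.I) (X (R := ℂ) (1 : Fin 2))
  obtain ⟨Q, hdeg, hQ⟩ := exists_eval_eq_re_eval (P.aeval ζ)
  refine ⟨Q, hdeg.trans ((totalDegree_aeval_le P ζ).trans (mul_le_of_le_one_right' hζ)),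
    fun x => ?_⟩
  have heval : eval (fun i => (x i : ℂ)) ζ = Complex.orthonormalBasisOneI.repr.symm x := by
    simp [ζ, mul_comm]
  have hC : (eval fun i => (x i : ℂ)).comp C = RingHom.id ℂ := RingHom.ext fun a => eval_C a
  rw [polyFun, hQ, Polynomial.aeval_def, Polynomial.hom_eval₂, heval, algebraMap_eq, hC,
    Polynomial.eval₂_id]

end

theorem nodalComponents_image {X Y : Type*} [TopologicalSpace X] [TopologicalSpace Y] (e : X ≃ₜ Y)
    (S : Set X) : nodalComponents (e '' S) = image e '' nodalComponents S := by
  ext C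
  constructor
  · rintro ⟨_, ⟨x, hx, rfl⟩, rfl⟩
    exact ⟨_, ⟨x, hx, rfl⟩, e.image_connectedComponentIn hx⟩
  · rintro ⟨_, ⟨x, hx, rfl⟩, rfl⟩
    exact ⟨e x, ⟨x, hx, rfl⟩, (e.image_connectedComponentIn hx).symm⟩

/-- **Nadirashvili's Liouville theorem** (Proposition 5.2): an entire harmonic function on ℝ²
with at most `k` nodal regions is a polynomial of degree at most `k - 1`. -/
theorem nadirashvili_liouville (k : ℕ) (hk : 1 ≤ k)
    (u : EuclideanSpace ℝ (Fin 2) → ℝ) (hu : HarmonicFn u)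
    (hfin : (nodalComponents {x | u x ≠ 0}).Finite)
    (hcard : (nodalComponents {x | u x ≠ 0}).ncard ≤ k) :
    ∃ P : MvPolynomial (Fin 2) ℝ, P.totalDegree ≤ k - 1 ∧ ∀ x, u x = polyFun P x := by
  obtain ⟨f, hf, hfu⟩ := hu.exists_differentiable_re_eq
  let e := Complex.orthonormalBasisOneI.repr.symm
  have hnodal : nodalComponents {z | (f z).re ≠ 0} =
      Set.image e '' nodalComponents {x | u x ≠ 0} := by
    rw [← e.coe_toHomeomorph, ← nodalComponents_image, e.toHomeomorph.image_eq_preimage_symm]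
    simp only [hfu]
    rfl
  obtain ⟨P, hdeg, hP⟩ :=
    exists_polynomial_natDegree_le_ncard_sub_one hf (hnodal ▸ hfin.image _)
  obtain ⟨Q, hQdeg, hQ⟩ := exists_polyFun_eq_re_eval P
  refine ⟨Q, hQdeg.trans (hdeg.trans ?_), fun x => ?_⟩
  · rw [hnodal]
    exact Nat.sub_le_sub_right ((Set.ncard_image_le hfin).trans hcard) 1
  · rw [hQ, ← hP, hfu, LinearIsometryEquiv.apply_symm_apply]
end
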